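/- arXiv:1906.01898 — 3 statements merged into one kernel-verified Lean document; each statement's English description precedes it below -/
import Mathlib

section
/- Let (Ω,T) be a subshift over a finite alphabet A with uniform word frequencies (uniquely ergodic). Suppose there exist a one-sided infinite word p : {1,2,…} → A, r ∈ ℕ and finite words v^(1),…,v^(r) such that, defining ω^(j) ∈ A^ℤ by ω^(j)(n) := p(n+1) for n ≥ 0, ω^(j)(−|v^(j)|)⋯ω^(j)(−1) := v^(j), and ω^(j)(−|v^(j)|−n) := p(n) for n ≥ 1, the following hold: (α') each ω^(j) belongs to Ω and condition (α) holds with leading words ω^(1),…,ω^(r); (β') p satisfies condition (PQ), and for every subadditive F : W(Ω) → ℝ there is a sequence (p^(n)) of prefixes of p with |p^(n)| → ∞ and F(p^(n))/|p^(n)| → F̄; (γ') for every j ∈ {1,…,r} there is a sequence (w_k) of finite words with |w_k| → ∞ such that for each k the word w_k w_k w_k occurs in ω^(j) at position −|w_k| or at position −2|w_k|. Then (Ω,T) satisfies conditions (β) and (γ), and hence the leading sequence condition (LSC). -/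
open Filter Topology MeasureTheory

noncomputable section

abbrev SL2 := Matrix.SpecialLinearGroup (Fin 2) ℝ

/-- Operator norm of a 2×2 real matrix acting on Euclidean ℝ². -/
def matNorm (M : Matrix (Fin 2) (Fin 2) ℝ) : ℝ :=
  ‖LinearMap.toContinuousLinearMap (Matrix.toEuclideanLin M)‖

/-- Norm of an element of SL(2,ℝ). -/
def slNorm (M : SL2) : ℝ := matNorm (M : Matrix (Fin 2) (Fin 2) ℝ)

/-- Action of an SL(2,ℝ) matrix on a euclidean vector. -/
def slAct (M : SL2) (v : EuclideanSpace ℝ (Fin 2)) : EuclideanSpace ℝ (Fin 2) :=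
  Matrix.toEuclideanLin (M : Matrix (Fin 2) (Fin 2) ℝ) v

variable {𝒜 : Type*}

/-- The shift by `k` on two-sided sequences; `shift 1` is the left shift `T`. -/
def shift (k : ℤ) (ω : ℤ → 𝒜) : ℤ → 𝒜 := fun n => ω (n + k)

/-- `Ω ⊆ 𝒜^ℤ` is a subshift: nonempty, closed, invariant under the shift and its inverse. -/
structure IsSubshift [TopologicalSpace 𝒜] (Ω : Set (ℤ → 𝒜)) : Prop where
  nonempty : Ω.Nonempty
  closed : IsClosed Ω
  shift_mem : ∀ ω ∈ Ω, shift 1 ω ∈ Ω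
  shift_neg_mem : ∀ ω ∈ Ω, shift (-1) ω ∈ Ω

/-- The word `ω(k) ω(k+1) ⋯ ω(k+n-1)`. -/
def word (ω : ℤ → 𝒜) (k : ℤ) (n : ℕ) : List 𝒜 := (List.range n).map fun i => ω (k + i)

/-- `v` occurs in `ω` at position `k`. -/
def occursAt (v : List 𝒜) (ω : ℤ → 𝒜) (k : ℤ) : Prop := v = word ω k v.length

/-- The words of length `n` occurring in elements of `Ω`. -/
def WordsN (Ω : Set (ℤ → 𝒜)) (n : ℕ) : Set (List 𝒜) :=
  {v | ∃ ω ∈ Ω, ∃ k : ℤ, v = word ω k n}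

/-- The (nonempty) finite words occurring in elements of `Ω`. -/
def Words (Ω : Set (ℤ → 𝒜)) : Set (List 𝒜) :=
  {v | 1 ≤ v.length ∧ v ∈ WordsN Ω v.length}

/-- `A` is locally constant on `Ω`: its value depends only on a finite window around 0. -/
def LocConstOn (Ω : Set (ℤ → 𝒜)) {β : Type*} (A : (ℤ → 𝒜) → β) : Prop :=
  ∃ N : ℕ, ∀ ω ∈ Ω, ∀ ρ ∈ Ω, (∀ i : ℤ, |i| ≤ (N : ℤ) → ω i = ρ i) → A ω = A ρ

/-- The positive part of the cocycle: `cocycleP A n ω = A(T^{n-1}ω) ⋯ A(ω)`. -/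
def cocycleP (A : (ℤ → 𝒜) → SL2) : ℕ → (ℤ → 𝒜) → SL2
  | 0, _ => 1
  | n + 1, ω => A (shift n ω) * cocycleP A n ω

/-- The full cocycle over the shift, `n ∈ ℤ`. -/
def cocycle (A : (ℤ → 𝒜) → SL2) (n : ℤ) (ω : ℤ → 𝒜) : SL2 :=
  if 0 ≤ n then cocycleP A n.toNat ω else (cocycleP A (-n).toNat (shift n ω))⁻¹

/-- `A` is uniform on `Ω`: `(1/n) log‖A(n,ω)‖` converges uniformly on `Ω`. -/
def IsUniform (Ω : Set (ℤ → 𝒜)) (A : (ℤ → 𝒜) → SL2) : Prop :=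
  ∃ Λ : ℝ, TendstoUniformlyOn
    (fun (n : ℕ) (ω : ℤ → 𝒜) => Real.log (slNorm (cocycle A n ω)) / n)
    (fun _ => Λ) atTop Ω

/-- The number of occurrences of `v` in `ω(1)⋯ω(n)`. -/
def occCount (v : List 𝒜) (ω : ℤ → 𝒜) (n : ℕ) : ℕ :=
  Set.ncard {k : ℤ | 1 ≤ k ∧ k + v.length ≤ (n : ℤ) + 1 ∧ occursAt v ω k}

/-- Uniform existence of word frequencies (unique ergodicity). -/
def UniformWordFreq (Ω : Set (ℤ → 𝒜)) : Prop :=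
  ∀ v ∈ Words Ω, ∃ ν : ℝ, TendstoUniformlyOn
    (fun (n : ℕ) (ω : ℤ → 𝒜) => (occCount v ω n : ℝ) / n) (fun _ => ν) atTop Ω

/-- Minimality: every orbit is dense in `Ω`. -/
def IsMinimalSubshift [TopologicalSpace 𝒜] (Ω : Set (ℤ → 𝒜)) : Prop :=
  ∀ ω ∈ Ω, ∀ ρ ∈ Ω, ρ ∈ closure {σ : ℤ → 𝒜 | ∃ k : ℤ, σ = shift k ω}

/-- Condition (α): for all large `n`, the words of length `n` of `Ω` are exactly the
words `lead j (-k+1) ⋯ lead j (-k+n)`, `0 ≤ k ≤ n`, of the leading words. -/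
def CondAlpha (Ω : Set (ℤ → 𝒜)) {r : ℕ} (lead : Fin r → (ℤ → 𝒜)) : Prop :=
  (∀ j, lead j ∈ Ω) ∧ ∃ N : ℕ, ∀ n : ℕ, N ≤ n →
    WordsN Ω n = {v | ∃ j : Fin r, ∃ k : ℕ, k ≤ n ∧ v = word (lead j) (1 - (k : ℤ)) n}

/-- Condition (β): for every locally constant cocycle the Lyapunov limits along the
leading words exist in both time directions and all have the same value. -/
def CondBeta (Ω : Set (ℤ → 𝒜)) {r : ℕ} (lead : Fin r → (ℤ → 𝒜)) : Prop :=
  ∀ A : (ℤ → 𝒜) → SL2, LocConstOn Ω A → ∃ Λ : ℝ, ∀ j : Fin r,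
    Tendsto (fun n : ℕ => Real.log (slNorm (cocycle A n (lead j))) / n) atTop (𝓝 Λ) ∧
    Tendsto (fun n : ℕ => Real.log (slNorm (cocycle A (-(n : ℤ)) (lead j))) / n) atTop (𝓝 Λ)

/-- Condition (γ): along the leading words, for every locally constant cocycle and every
nonzero vector, at most one of the two one-sided exponents is negative. -/
def CondGamma (Ω : Set (ℤ → 𝒜)) {r : ℕ} (lead : Fin r → (ℤ → 𝒜)) : Prop :=
  ∀ A : (ℤ → 𝒜) → SL2, LocConstOn Ω A → ∀ j : Fin r,
    ∀ v : EuclideanSpace ℝ (Fin 2), v ≠ 0 →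
    ¬ (limsup (fun n : ℕ => Real.log ‖slAct (cocycle A n (lead j)) v‖ / n) atTop < 0 ∧
       limsup (fun n : ℕ => Real.log ‖slAct (cocycle A (-(n : ℤ)) (lead j)) v‖ / n) atTop < 0)

/-- The leading sequence condition (LSC). -/
def SatisfiesLSC (Ω : Set (ℤ → 𝒜)) : Prop :=
  ∃ (r : ℕ) (lead : Fin r → (ℤ → 𝒜)), CondAlpha Ω lead ∧ CondBeta Ω lead ∧ CondGamma Ω lead

/-- `F` is subadditive on the words of `Ω`. -/
def SubadditiveOn (Ω : Set (ℤ → 𝒜)) (F : List 𝒜 → ℝ) : Prop :=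
  ∀ x y : List 𝒜, x ∈ Words Ω → y ∈ Words Ω → (x ++ y) ∈ Words Ω → F (x ++ y) ≤ F x + F y

/-- `Fb` is the asymptotic mean `lim_n max { F x / n : x ∈ W(Ω)_n }` of `F`. -/
def IsAsympMean (Ω : Set (ℤ → 𝒜)) (F : List 𝒜 → ℝ) (Fb : ℝ) : Prop :=
  Tendsto (fun n : ℕ => sSup ((fun x => F x / n) '' WordsN Ω n)) atTop (𝓝 Fb)

/-- Maximal number of pairwise disjoint occurrences of `v` in `ω(1)⋯ω(n)`. -/
def disjCount (v : List 𝒜) (ω : ℤ → 𝒜) (n : ℕ) : ℕ :=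
  sSup {m : ℕ | ∃ S : Finset ℤ, S.card = m ∧
    (∀ k ∈ S, 1 ≤ k ∧ k + v.length ≤ (n : ℤ) + 1 ∧ occursAt v ω k) ∧
    (∀ k ∈ S, ∀ l ∈ S, k ≠ l → (v.length : ℤ) ≤ |k - l|)}

/-- Condition (PQ) for the one-sided word `p(1)p(2)⋯`. -/
def CondPQ (p : ℤ → 𝒜) : Prop :=
  ∃ c : ℝ, 0 < c ∧ ∀ m : ℕ, 1 ≤ m →
    c ≤ liminf (fun n : ℕ => (m : ℝ) / n * disjCount (word p 1 m) p n) atTop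

/-- ℓ²(ℤ) over the reals. -/
abbrev Ell2Z : Type := lp (fun _ : ℤ => ℝ) 2

/-- `H` acts as the Jacobi operator with coefficients `f, g` at `ω`. -/
def IsJacobiAt (f g : (ℤ → 𝒜) → ℝ) (ω : ℤ → 𝒜) (H : Ell2Z →L[ℝ] Ell2Z) : Prop :=
  ∀ u : Ell2Z, ∀ n : ℤ,
    (H u : ∀ _ : ℤ, ℝ) n =
      f (shift n ω) * (u : ∀ _ : ℤ, ℝ) (n - 1) + f (shift (n + 1) ω) * (u : ∀ _ : ℤ, ℝ) (n + 1)
        + g (shift n ω) * (u : ∀ _ : ℤ, ℝ) n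

/-- The pair `(f,g)` is periodic on `Ω`. -/
def PeriodicPair (Ω : Set (ℤ → 𝒜)) (f g : (ℤ → 𝒜) → ℝ) : Prop :=
  ∃ P : ℕ, 1 ≤ P ∧ ∀ ω ∈ Ω, f (shift (P : ℤ) ω) = f ω ∧ g (shift (P : ℤ) ω) = g ω

/-- `S ⊆ ℝ` is a Cantor set of Lebesgue measure zero: compact, empty interior,
no isolated points, Lebesgue measure zero. -/
def IsMeasureZeroCantor (S : Set ℝ) : Prop :=
  IsCompact S ∧ interior S = ∅ ∧ Perfect S ∧ volume S = 0

/-- `n` copies of `x` separated by `n-1` copies of the letter `l`. -/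
def sepJoin (x : List 𝒜) (l : 𝒜) (m : ℕ) : List 𝒜 :=
  (List.replicate (m - 1) (x ++ [l])).flatten ++ x

/-- `Blk a nseq (k+1)` is the block `block(k)` of the simple Toeplitz construction
(with `Blk a nseq 0 = block(-1) = ε`). -/
def Blk (a : ℕ → 𝒜) (nseq : ℕ → ℕ) : ℕ → List 𝒜
  | 0 => []
  | k + 1 => sepJoin (Blk a nseq k) (a k) (nseq k)

/-- `p(1)p(2)⋯` is the one-sided word `block(∞)`: every block is a prefix of it. -/
def IsBlockInf (a : ℕ → 𝒜) (nseq : ℕ → ℕ) (p : ℤ → 𝒜) : Prop :=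
  ∀ k : ℕ, word p 1 (Blk a nseq k).length = Blk a nseq k

/-- The simple Toeplitz subshift generated by `block(∞) = p(1)p(2)⋯`: all two-sided
sequences whose finite subwords all occur in `block(∞)`. -/
def toeplitzΩ (p : ℤ → 𝒜) : Set (ℤ → 𝒜) :=
  {ω | ∀ (i : ℤ) (n : ℕ), ∃ l : ℤ, 1 ≤ l ∧ word ω i n = word p l n}

/-- The eventual alphabet: letters occurring infinitely often in `(a_k)`. -/
def EvAlph (a : ℕ → 𝒜) : Set 𝒜 := {x | ∀ K : ℕ, ∃ k, K ≤ k ∧ a k = x}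

/-- The leading word `p^R v | p`: equals `p(n+1)` for `n ≥ 0`, carries the word `v` on
positions `-|v|, …, -1`, and equals `p(-(n+|v|))` for `n < -|v|`. -/
def leadWordGen (p : ℤ → 𝒜) (v : List 𝒜) : ℤ → 𝒜 := fun n =>
  if 0 ≤ n then p (n + 1)
  else if -(v.length : ℤ) ≤ n then v.getD (n + v.length).toNat (p 1)
  else p (-(n + v.length))

/-- The Gauss map. -/
def gaussMap (x : ℝ) : ℝ := 1 / x - ⌊1 / x⌋

/-- `cfSeq α n` is the continued fraction coefficient `a_{n+1}` of `α`. -/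
def cfSeq (α : ℝ) (n : ℕ) : ℕ := ⌊1 / (gaussMap^[n] α)⌋₊

/-- The standard Sturmian words: `sturmW α (n+1) = s_n`, `sturmW α 0 = s_{-1} = 1`,
`sturmW α 1 = s_0 = 0`, `s_1 = s_0^{a_1 - 1} s_{-1}`, `s_n = s_{n-1}^{a_n} s_{n-2}`. -/
def sturmW (α : ℝ) : ℕ → List (Fin 2)
  | 0 => [1]
  | 1 => [0]
  | 2 => List.replicate (cfSeq α 0 - 1) (0 : Fin 2) ++ [1]
  | n + 3 => (List.replicate (cfSeq α (n + 1)) (sturmW α (n + 2))).flatten ++ sturmW α (n + 1)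

/-- The Sturmian subshift with rotation number `α`: all two-sided sequences whose finite
subwords occur in some `s_n`. -/
def sturmΩ (α : ℝ) : Set (ℤ → Fin 2) :=
  {ω | ∀ (i : ℤ) (n : ℕ), ∃ m : ℕ, word ω i n <:+: sturmW α m}

/-- The positive cocycle of a map `A` over a transformation `T`:
`cocycleH T A n ω = A(T^{n-1}ω) ⋯ A(ω)`. -/
def cocycleH {Ω : Type*} (T : Ω → Ω) (A : Ω → SL2) : ℕ → Ω → SL2
  | 0, _ => 1
  | n + 1, ω => A (T^[n] ω) * cocycleH T A n ω

end

/-! Norm facts in SL(2,ℝ). -/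
section S11

set_option linter.unusedSimpArgs false

open scoped Matrix

noncomputable def sl_ell (M : SL2) : ℝ := Real.log (slNorm M)

open scoped Matrix.Norms.L2Operator in
lemma slNorm_eq (M : SL2) : slNorm M = ‖(M : Matrix (Fin 2) (Fin 2) ℝ)‖ := rfl

open scoped Matrix.Norms.L2Operator in
lemma slNorm_mul_le (M N : SL2) : slNorm (M * N) ≤ slNorm M * slNorm N := by
  rw [slNorm_eq, slNorm_eq, slNorm_eq, Matrix.SpecialLinearGroup.coe_mul]
  exact Matrix.l2_opNorm_mul _ _

open scoped Matrix.Norms.L2Operator in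
lemma slNorm_one : slNorm 1 = 1 := by
  rw [slNorm_eq, Matrix.SpecialLinearGroup.coe_one]
  exact CStarRing.norm_one

open scoped Matrix.Norms.L2Operator in
lemma slNorm_inv_le (M : SL2) : slNorm M⁻¹ ≤ slNorm M := by
  rw [slNorm_eq, slNorm_eq]
  set R : Matrix (Fin 2) (Fin 2) ℝ := !![0, 1; -1, 0] with hR
  have hU : R ∈ unitary (Matrix (Fin 2) (Fin 2) ℝ) := by
    rw [Unitary.mem_iff]
    constructor <;> ext i j <;> fin_cases i <;> fin_cases j <;>
      simp [hR, Matrix.mul_apply, Matrix.star_apply, Fin.sum_univ_two]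
  have hn : ‖R‖ = 1 := CStarRing.norm_of_mem_unitary hU
  have hn' : ‖Rᴴ‖ = 1 := by rw [Matrix.l2_opNorm_conjTranspose, hn]
  have e : ((M⁻¹ : SL2) : Matrix (Fin 2) (Fin 2) ℝ) = R * (M : Matrix (Fin 2) (Fin 2) ℝ)ᴴ * Rᴴ := by
    rw [Matrix.SpecialLinearGroup.coe_inv, Matrix.adjugate_fin_two]
    ext i j
    fin_cases i <;> fin_cases j <;>
      simp [hR, Matrix.mul_apply, Fin.sum_univ_two, Matrix.conjTranspose_apply, Matrix.vecMul,
        dotProduct]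
  rw [e]
  calc _ ≤ ‖R * (M : Matrix (Fin 2) (Fin 2) ℝ)ᴴ‖ * ‖Rᴴ‖ := Matrix.l2_opNorm_mul _ _
    _ ≤ (‖R‖ * ‖(M : Matrix (Fin 2) (Fin 2) ℝ)ᴴ‖) * ‖Rᴴ‖ := by
        gcongr; exact Matrix.l2_opNorm_mul _ _
    _ = _ := by rw [hn, hn', Matrix.l2_opNorm_conjTranspose]; ring

lemma slNorm_nonneg (M : SL2) : 0 ≤ slNorm M := norm_nonneg _

lemma one_le_slNorm (M : SL2) : 1 ≤ slNorm M := by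
  have h1 : slNorm (M * M⁻¹) ≤ slNorm M * slNorm M⁻¹ := slNorm_mul_le _ _
  rw [mul_inv_cancel, slNorm_one] at h1
  have h2 := slNorm_inv_le M
  have h3 := slNorm_nonneg M
  nlinarith

lemma slAct_norm_le (M : SL2) (v : EuclideanSpace ℝ (Fin 2)) :
    ‖slAct M v‖ ≤ slNorm M * ‖v‖ :=
  (LinearMap.toContinuousLinearMap (Matrix.toEuclideanLin
    (M : Matrix (Fin 2) (Fin 2) ℝ))).le_opNorm v

lemma slAct_mul (M N : SL2) (v : EuclideanSpace ℝ (Fin 2)) :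
    slAct (M * N) v = slAct M (slAct N v) := by
  simp [slAct, Matrix.toLpLin_apply, Matrix.mulVec_mulVec]

lemma slAct_one (v : EuclideanSpace ℝ (Fin 2)) : slAct 1 v = v := by
  simp [slAct, Matrix.toLpLin_apply]

lemma ell_mul_le (M N : SL2) : sl_ell (M * N) ≤ sl_ell M + sl_ell N := by
  unfold sl_ell
  have h1 := one_le_slNorm M
  have h2 := one_le_slNorm N
  have h3 := one_le_slNorm (M * N)
  rw [← Real.log_mul (by linarith) (by linarith)]
  exact Real.log_le_log (by linarith) (slNorm_mul_le M N)

lemma ell_nonneg (M : SL2) : 0 ≤ sl_ell M := Real.log_nonneg (one_le_slNorm M)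

lemma ell_one : sl_ell 1 = 0 := by simp [sl_ell, slNorm_one]

lemma ell_inv (M : SL2) : sl_ell M⁻¹ = sl_ell M := by
  unfold sl_ell
  congr 1
  apply le_antisymm (slNorm_inv_le M)
  simpa using slNorm_inv_le M⁻¹

lemma slAct_le_exp (M : SL2) (v : EuclideanSpace ℝ (Fin 2)) {D : ℝ} (h : sl_ell M ≤ D) :
    ‖slAct M v‖ ≤ Real.exp D * ‖v‖ := by
  refine (slAct_norm_le M v).trans ?_
  gcongr
  rw [← Real.log_le_iff_le_exp (by linarith [one_le_slNorm M])]
  exact h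

/-- three-block Gordon estimate -/
lemma gordon (M : SL2) (v : EuclideanSpace ℝ (Fin 2)) :
    ‖v‖ ≤ ‖slAct M v‖ + ‖slAct (M * M) v‖ + ‖slAct M⁻¹ v‖ := by
  set t : ℝ := (M : Matrix (Fin 2) (Fin 2) ℝ) 0 0 + (M : Matrix (Fin 2) (Fin 2) ℝ) 1 1 with ht
  have hdet : (M : Matrix (Fin 2) (Fin 2) ℝ) 0 0 * (M : Matrix (Fin 2) (Fin 2) ℝ) 1 1
      - (M : Matrix (Fin 2) (Fin 2) ℝ) 0 1 * (M : Matrix (Fin 2) (Fin 2) ℝ) 1 0 = 1 := by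
    rw [← Matrix.det_fin_two]; exact M.2
  have e1 : t • v = slAct M v + slAct M⁻¹ v := by
    ext i
    fin_cases i <;>
    simp [slAct, Matrix.toLpLin_apply, Matrix.mulVec, dotProduct, Fin.sum_univ_two,
      Matrix.SpecialLinearGroup.coe_inv, Matrix.adjugate_fin_two, ht] <;> ring
  have e2 : v = t • slAct M v - slAct (M * M) v := by
    ext i
    fin_cases i <;>
    simp [slAct, Matrix.toLpLin_apply, Matrix.mulVec, dotProduct, Fin.sum_univ_two,
      Matrix.mul_apply, ht]
    · linear_combination (-(v 0)) * hdet
    · linear_combination (-(v 1)) * hdet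
  have n1 := norm_nonneg (slAct M v)
  have n2 := norm_nonneg (slAct (M * M) v)
  have n3 := norm_nonneg (slAct M⁻¹ v)
  rcases le_total |t| 1 with h | h
  · have : ‖v‖ ≤ ‖t • slAct M v‖ + ‖slAct (M * M) v‖ := by
      conv_lhs => rw [e2]
      exact norm_sub_le _ _
    rw [norm_smul, Real.norm_eq_abs] at this
    nlinarith
  · have : ‖t • v‖ ≤ ‖slAct M v‖ + ‖slAct M⁻¹ v‖ := by rw [e1]; exact norm_add_le _ _
    rw [norm_smul, Real.norm_eq_abs] at this
    nlinarith [norm_nonneg v]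

/-! Words and cocycles. -/

variable {𝒜 : Type*}

lemma word_eq (ω : ℤ → 𝒜) (k : ℤ) (n : ℕ) :
    word ω k n = (List.range n).map (fun i : ℕ => ω (k + (i : ℤ))) := by
  simp only [word, List.bind_eq_flatMap, List.pure_def, List.map_flatMap, List.map_cons,
    List.map_nil]
  rw [← List.map_eq_flatMap]

lemma word_length (ω : ℤ → 𝒜) (k : ℤ) (n : ℕ) : (word ω k n).length = n := by simp [word_eq]

lemma word_ext {ω ω' : ℤ → 𝒜} {k k' : ℤ} {n : ℕ} :
    word ω k n = word ω' k' n ↔ ∀ i : ℕ, i < n → ω (k + i) = ω' (k' + i) := by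
  simp [word_eq]

lemma word_add (ω : ℤ → 𝒜) (k : ℤ) (m n : ℕ) :
    word ω k (m + n) = word ω k m ++ word ω (k + m) n := by
  simp only [word_eq, List.range_add, List.map_append, List.map_map]
  congr 1
  apply List.map_congr_left
  intro a _
  simp [add_assoc]

lemma word_reverse (ω ω' : ℤ → 𝒜) (k k' : ℤ) (n : ℕ)
    (h : ∀ i : ℕ, i < n → ω (k + (n - 1 - i : ℕ)) = ω' (k' + i)) :
    (word ω k n).reverse = word ω' k' n := by
  apply List.ext_getElem
  · simp [word_eq]
  · intro i h1 h2
    have hi : i < n := by simpa [word_eq] using h2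
    simp only [word_eq, List.getElem_reverse, List.getElem_map, List.getElem_range, List.length_map,
      List.length_range]
    exact h i hi

lemma word_shift (ω : ℤ → 𝒜) (a k : ℤ) (n : ℕ) : word (shift a ω) k n = word ω (k + a) n := by
  rw [word_ext]; intro i _; simp only [shift]; congr 1; ring

lemma shift_shift (a b : ℤ) (ω : ℤ → 𝒜) : shift a (shift b ω) = shift (a + b) ω := by
  funext n; simp [shift, add_assoc]

lemma shift_zero' (ω : ℤ → 𝒜) : shift 0 ω = ω := by
  funext n; simp [shift]

lemma shift_mem_all [TopologicalSpace 𝒜] {Ω : Set (ℤ → 𝒜)} (hΩ : IsSubshift Ω) (k : ℤ) :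
    ∀ ω ∈ Ω, shift k ω ∈ Ω := by
  induction k with
  | zero => intro ω h; rwa [shift_zero']
  | succ i ih =>
    intro ω h
    have := hΩ.shift_mem _ (ih ω h)
    rwa [shift_shift, add_comm] at this
  | pred i ih =>
    intro ω h
    have := hΩ.shift_neg_mem _ (ih ω h)
    rwa [shift_shift, add_comm, ← sub_eq_add_neg] at this

lemma cocycleP_add (A : (ℤ → 𝒜) → SL2) (m n : ℕ) (ω : ℤ → 𝒜) :
    cocycleP A (m + n) ω = cocycleP A n (shift m ω) * cocycleP A m ω := by
  induction n with
  | zero => simp [cocycleP]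
  | succ n ih =>
    rw [← add_assoc]
    simp only [cocycleP, ih, shift_shift]
    rw [mul_assoc]
    congr 3
    push_cast; ring

lemma cocycle_nat (A : (ℤ → 𝒜) → SL2) (n : ℕ) (ω : ℤ → 𝒜) :
    cocycle A n ω = cocycleP A n ω := by simp [cocycle]

lemma cocycle_neg (A : (ℤ → 𝒜) → SL2) (n : ℕ) (ω : ℤ → 𝒜) :
    cocycle A (-(n : ℤ)) ω = (cocycleP A n (shift (-(n : ℤ)) ω))⁻¹ := by
  rcases Nat.eq_zero_or_pos n with rfl | h
  · simp [cocycle, cocycleP]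
  · rw [cocycle, if_neg (by omega)]; simp

lemma bounded_of_locConst [Fintype 𝒜] {Ω : Set (ℤ → 𝒜)} {A : (ℤ → 𝒜) → SL2}
    (hA : LocConstOn Ω A) : ∃ C : ℝ, 0 ≤ C ∧ ∀ ω ∈ Ω, sl_ell (A ω) ≤ C := by
  classical
  obtain ⟨N, hN⟩ := hA
  let R : (ℤ → 𝒜) → (Finset.Icc (-(N : ℤ)) N → 𝒜) := fun ω i => ω i
  let h : (Finset.Icc (-(N : ℤ)) N → 𝒜) → ℝ := fun g =>
    if H : ∃ ω ∈ Ω, R ω = g then sl_ell (A H.choose) else 0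
  have hh : ∀ ω ∈ Ω, h (R ω) = sl_ell (A ω) := by
    intro ω hω
    have H : ∃ ω' ∈ Ω, R ω' = R ω := ⟨ω, hω, rfl⟩
    simp only [h]
    rw [dif_pos H]
    congr 1
    apply hN _ H.choose_spec.1 _ hω
    intro i hi
    have := congrFun H.choose_spec.2 ⟨i, by rw [Finset.mem_Icc]; exact abs_le.mp hi⟩
    exact this
  obtain ⟨C, hC⟩ := (Set.finite_range h).bddAbove
  refine ⟨max C 0, le_max_right _ _, fun ω hω => ?_⟩
  rw [← hh ω hω]
  exact (hC ⟨_, rfl⟩).trans (le_max_left _ _)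

section coc
variable [TopologicalSpace 𝒜] {Ω : Set (ℤ → 𝒜)} (hΩ : IsSubshift Ω)
  {A : (ℤ → 𝒜) → SL2} {C : ℝ} (hC0 : 0 ≤ C) (hC : ∀ ω ∈ Ω, sl_ell (A ω) ≤ C) {N : ℕ}
  (hN : ∀ ω ∈ Ω, ∀ ρ ∈ Ω, (∀ i : ℤ, |i| ≤ (N : ℤ) → ω i = ρ i) → A ω = A ρ)

include hΩ hC in
lemma ell_cocycleP_le (n : ℕ) : ∀ ω ∈ Ω, sl_ell (cocycleP A n ω) ≤ n * C := by
  intro ω hω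
  induction n with
  | zero => simp [cocycleP, ell_one]
  | succ n ih =>
    simp only [cocycleP]
    have h1 := ell_mul_le (A (shift n ω)) (cocycleP A n ω)
    have h2 := hC _ (shift_mem_all hΩ n ω hω)
    push_cast
    linarith

include hΩ hN in
lemma cocycleP_congr (n : ℕ) {ω ρ : ℤ → 𝒜} (hω : ω ∈ Ω) (hρ : ρ ∈ Ω)
    (h : ∀ i : ℤ, -(N : ℤ) ≤ i → i < n + N → ω i = ρ i) : cocycleP A n ω = cocycleP A n ρ := by
  induction n with
  | zero => rfl
  | succ n ih =>
    simp only [cocycleP]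
    rw [ih (fun i h1 h2 => h i h1 (by push_cast; omega)),
      hN _ (shift_mem_all hΩ n ω hω) _ (shift_mem_all hΩ n ρ hρ)]
    intro i hi
    rw [abs_le] at hi
    exact h _ (by omega) (by push_cast; omega)

include hΩ hC hN in
lemma compareR {n : ℕ} (hn : N ≤ n) {ω ρ : ℤ → 𝒜} (hω : ω ∈ Ω) (hρ : ρ ∈ Ω)
    (h : ∀ i : ℤ, -(N : ℤ) ≤ i → i < n → ω i = ρ i) :
    ∃ E : SL2, sl_ell E ≤ 2 * N * C ∧ cocycleP A n ρ = E * cocycleP A n ω := by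
  obtain ⟨k, rfl⟩ := Nat.exists_eq_add_of_le' hn
  have e : cocycleP A k ω = cocycleP A k ρ :=
    cocycleP_congr hΩ hN k hω hρ (fun i h1 h2 => h i h1 (by push_cast; omega))
  refine ⟨cocycleP A N (shift k ρ) * (cocycleP A N (shift k ω))⁻¹, ?_, ?_⟩
  · have h1 := ell_cocycleP_le hΩ hC N _ (shift_mem_all hΩ k ω hω)
    have h2 := ell_cocycleP_le hΩ hC N _ (shift_mem_all hΩ k ρ hρ)
    have h3 := ell_mul_le (cocycleP A N (shift k ρ)) (cocycleP A N (shift k ω))⁻¹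
    rw [ell_inv] at h3
    linarith
  · rw [cocycleP_add, cocycleP_add, e]; group

include hΩ hC hN in
lemma compareL {n : ℕ} (hn : N ≤ n) {ω ρ : ℤ → 𝒜} (hω : ω ∈ Ω) (hρ : ρ ∈ Ω)
    (h : ∀ i : ℤ, 0 ≤ i → i < n + N → ω i = ρ i) :
    ∃ E : SL2, sl_ell E ≤ 2 * N * C ∧ cocycleP A n ρ = cocycleP A n ω * E := by
  obtain ⟨k, rfl⟩ := Nat.exists_eq_add_of_le hn
  have e : cocycleP A k (shift N ω) = cocycleP A k (shift N ρ) :=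
    cocycleP_congr hΩ hN k (shift_mem_all hΩ N ω hω) (shift_mem_all hΩ N ρ hρ)
      (fun i h1 h2 => h _ (by omega) (by push_cast; omega))
  refine ⟨(cocycleP A N ω)⁻¹ * cocycleP A N ρ, ?_, ?_⟩
  · have h1 := ell_cocycleP_le hΩ hC N _ hω
    have h2 := ell_cocycleP_le hΩ hC N _ hρ
    have h3 := ell_mul_le (cocycleP A N ω)⁻¹ (cocycleP A N ρ)
    rw [ell_inv] at h3
    linarith
  · rw [cocycleP_add, cocycleP_add, e]; group

include hΩ hC0 hC hN in
lemma compare_word (n : ℕ) {ω ρ : ℤ → 𝒜} (hω : ω ∈ Ω) (hρ : ρ ∈ Ω)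
    (h : ∀ i : ℤ, 0 ≤ i → i < n → ω i = ρ i) :
    sl_ell (cocycleP A n ω) ≤ sl_ell (cocycleP A n ρ) + 4 * N * C := by
  have hNC : 0 ≤ (N : ℝ) * C := by positivity
  rcases le_total n (2 * N) with hn | hn
  · have h1 := ell_cocycleP_le hΩ hC n _ hω
    have h2 := ell_nonneg (cocycleP A n ρ)
    have : (n : ℝ) ≤ 2 * N := by exact_mod_cast hn
    nlinarith
  · obtain ⟨k, rfl⟩ := Nat.exists_eq_add_of_le hn
    have e2 : 2 * N + k = N + (k + N) := by ring
    rw [e2, cocycleP_add, cocycleP_add, cocycleP_add, cocycleP_add]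
    have e : cocycleP A k (shift N ω) = cocycleP A k (shift N ρ) :=
      cocycleP_congr hΩ hN k (shift_mem_all hΩ N ω hω) (shift_mem_all hΩ N ρ hρ)
        (fun i h1 h2 => h _ (by omega) (by push_cast; omega))
    rw [e]
    set M := cocycleP A k (shift N ρ)
    have a1 := ell_cocycleP_le hΩ hC N _ hω
    have a2 := ell_cocycleP_le hΩ hC N _ hρ
    have a3 := ell_cocycleP_le hΩ hC N _ (shift_mem_all hΩ k _ (shift_mem_all hΩ N ω hω))
    have a4 := ell_cocycleP_le hΩ hC N _ (shift_mem_all hΩ k _ (shift_mem_all hΩ N ρ hρ))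
    set P := cocycleP A N (shift k (shift N ω))
    set Q := cocycleP A N ω
    set P' := cocycleP A N (shift k (shift N ρ))
    set Q' := cocycleP A N ρ
    have b1 := ell_mul_le (P * M) Q
    have b2 := ell_mul_le P M
    have b3 := ell_mul_le (P'⁻¹ * (P' * M * Q')) Q'⁻¹
    have b4 := ell_mul_le P'⁻¹ (P' * M * Q')
    have b5 : P'⁻¹ * (P' * M * Q') * Q'⁻¹ = M := by group
    rw [b5] at b3
    rw [ell_inv] at b3 b4
    linarith

end coc

/-! The subadditive argument along prefixes, using (PQ). -/

lemma cut_lemma (F : List 𝒜 → ℝ) (p : ℤ → 𝒜)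
    (hsub : ∀ (a : ℤ) (m n : ℕ), 1 ≤ a →
      F (word p a (m + n)) ≤ F (word p a m) + F (word p (a + m) n))
    {B K : ℝ} (hup : ∀ (a : ℤ) (n : ℕ), 1 ≤ a → F (word p a n) ≤ B * n + K) (m : ℕ) (s : ℕ) :
    ∀ (S : Finset ℤ) (n : ℕ), S.card = s →
      (∀ k ∈ S, 1 ≤ k ∧ k + m ≤ (n : ℤ) + 1 ∧ word p k m = word p 1 m) →
      (∀ k ∈ S, ∀ l ∈ S, k ≠ l → (m : ℤ) ≤ |k - l|) →
      s * m ≤ n ∧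
      F (word p 1 n) ≤ s * F (word p 1 m) + (n - s * m) * B + (s + 1) * K := by
  induction s with
  | zero =>
    intro S n _ _ _
    refine ⟨by simp, ?_⟩
    have := hup 1 n le_rfl
    push_cast
    linarith
  | succ s ih =>
    intro S n hc hS hsep
    have hne : S.Nonempty := by rw [← Finset.card_pos]; omega
    set k := S.max' hne with hk
    have hkS : k ∈ S := S.max'_mem hne
    obtain ⟨k1, k2, k3⟩ := hS k hkS
    obtain ⟨q, hq⟩ : ∃ q : ℕ, k = 1 + (q : ℤ) := ⟨(k - 1).toNat, by omega⟩
    obtain ⟨t, ht⟩ : ∃ t : ℕ, n = q + (m + t) := ⟨n - q - m, by omega⟩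
    have hI := ih (S.erase k) q (by rw [Finset.card_erase_of_mem hkS, hc]; rfl)
      (fun l hl => by
        have hlS := Finset.mem_of_mem_erase hl
        have hlk := Finset.ne_of_mem_erase hl
        obtain ⟨l1, l2, l3⟩ := hS l hlS
        refine ⟨l1, ?_, l3⟩
        have h1 := hsep k hkS l hlS hlk.symm
        have h2 : l ≤ k := S.le_max' l hlS
        rw [abs_of_nonneg (by omega)] at h1
        omega)
      (fun a ha b hb => hsep a (Finset.mem_of_mem_erase ha) b (Finset.mem_of_mem_erase hb))
    obtain ⟨hI1, hI2⟩ := hI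
    refine ⟨by rw [ht, Nat.succ_mul]; omega, ?_⟩
    have e1 := hsub 1 q (m + t) le_rfl
    rw [← hq] at e1
    have e2 := hsub k m t k1
    rw [k3] at e2
    have e3 := hup (k + m) t (by omega)
    rw [ht]
    push_cast
    linarith

lemma disjCount_spec (p : ℤ → 𝒜) (v : List 𝒜) (n : ℕ) :
    ∃ S : Finset ℤ, S.card = disjCount v p n ∧
    (∀ k ∈ S, 1 ≤ k ∧ k + v.length ≤ (n : ℤ) + 1 ∧ occursAt v p k) ∧
    (∀ k ∈ S, ∀ l ∈ S, k ≠ l → (v.length : ℤ) ≤ |k - l|) := by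
  have := Nat.sSup_mem (s := {m : ℕ | ∃ S : Finset ℤ, S.card = m ∧
    (∀ k ∈ S, 1 ≤ k ∧ k + v.length ≤ (n : ℤ) + 1 ∧ occursAt v p k) ∧
    (∀ k ∈ S, ∀ l ∈ S, k ≠ l → (v.length : ℤ) ≤ |k - l|)}) ⟨0, ∅, by simp⟩ ?_
  · exact this
  · refine ⟨n + 1, ?_⟩
    rintro m ⟨S, rfl, h, -⟩
    have : S ⊆ Finset.Icc 1 ((n : ℤ) + 1) := by
      intro k hk
      obtain ⟨h1, h2, -⟩ := h k hk
      rw [Finset.mem_Icc]; omega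
    have := Finset.card_le_card this
    simpa using this

lemma prefix_tendsto (F : List 𝒜 → ℝ) (p : ℤ → 𝒜) (Fb : ℝ)
    (hsub : ∀ (a : ℤ) (m n : ℕ), 1 ≤ a →
      F (word p a (m + n)) ≤ F (word p a m) + F (word p (a + m) n))
    (hup : ∀ ε : ℝ, 0 < ε → ∃ K : ℝ, 0 ≤ K ∧ ∀ (a : ℤ) (n : ℕ), 1 ≤ a →
      F (word p a n) ≤ (Fb + ε) * n + K)
    (hPQ : CondPQ p) (mm : ℕ → ℕ) (hmm : Tendsto mm atTop atTop)
    (hlim : Tendsto (fun n : ℕ => F (word p 1 (mm n)) / (mm n)) atTop (𝓝 Fb)) :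
    Tendsto (fun n : ℕ => F (word p 1 n) / n) atTop (𝓝 Fb) := by
  obtain ⟨c, hc, hPQ⟩ := hPQ
  rw [tendsto_order]
  constructor
  · intro b hb
    by_contra hcon
    rw [not_eventually] at hcon
    set δ := Fb - b with hδ
    have hδ0 : 0 < δ := by linarith
    obtain ⟨K, hK0, hK⟩ := hup (c * δ / 8) (by positivity)
    -- choose a long bad prefix
    obtain ⟨m, hm1, hm2, hbad⟩ : ∃ m : ℕ, 1 ≤ m ∧ K ≤ c * δ / 8 * m ∧ F (word p 1 m) ≤ b * m := by
      have hev : ∀ᶠ n : ℕ in atTop, 1 ≤ n ∧ K ≤ c * δ / 8 * n := by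
        have : Tendsto (fun n : ℕ => c * δ / 8 * (n : ℝ)) atTop atTop :=
          tendsto_natCast_atTop_atTop.const_mul_atTop (by positivity)
        exact (eventually_ge_atTop 1).and (this.eventually_ge_atTop K)
      obtain ⟨m, h1, h2, h3⟩ := (hcon.and_eventually hev).exists
      refine ⟨m, h2, h3, ?_⟩
      rw [not_lt, div_le_iff₀ (by exact_mod_cast h2)] at h1
      exact h1
    have hm0 : (0 : ℝ) < m := by exact_mod_cast hm1
    have hfreq : ∀ᶠ n : ℕ in atTop, c / 2 < (m : ℝ) / n * disjCount (word p 1 m) p n := by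
      apply eventually_lt_of_lt_liminf
      · exact lt_of_lt_of_le (by linarith) (hPQ m hm1)
      · exact isBoundedUnder_of ⟨0, fun n => by positivity⟩
    have hKn : ∀ᶠ n : ℕ in atTop, 1 ≤ n ∧ K ≤ c * δ / 8 * n := by
      have : Tendsto (fun n : ℕ => c * δ / 8 * (n : ℝ)) atTop atTop :=
        tendsto_natCast_atTop_atTop.const_mul_atTop (by positivity)
      exact (eventually_ge_atTop 1).and (this.eventually_ge_atTop K)
    have hall : ∀ᶠ n : ℕ in atTop, F (word p 1 n) / n ≤ Fb - c * δ / 8 := by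
      filter_upwards [hfreq, hKn] with n h1 ⟨h2, h3⟩
      have hn0 : (0 : ℝ) < n := by exact_mod_cast h2
      obtain ⟨S, hS1, hS2, hS3⟩ := disjCount_spec p (word p 1 m) n
      simp only [word_length, occursAt] at hS2 hS3
      set s := disjCount (word p 1 m) p n
      obtain ⟨g1, g2⟩ := cut_lemma F p hsub hK m s S n hS1
        (fun k hk => ⟨(hS2 k hk).1, (hS2 k hk).2.1, (hS2 k hk).2.2.symm⟩) hS3
      have g1' : (s : ℝ) * m ≤ n := by exact_mod_cast g1
      have h1' : c / 2 * n ≤ s * m := by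
        rw [div_mul_eq_mul_div, lt_div_iff₀ hn0] at h1
        linarith
      rw [div_le_iff₀ hn0]
      have hs0 : (0 : ℝ) ≤ s := by positivity
      have q1 : (s : ℝ) * F (word p 1 m) ≤ s * (b * m) := by gcongr
      have q2 : (s : ℝ) * K ≤ s * (c * δ / 8 * m) := by gcongr
      have q3 : c * δ / 8 * (s * m) ≤ c * δ / 8 * n := by gcongr
      have q4 : δ * (c / 2 * n) ≤ δ * (s * m) := by gcongr
      have q5 : 0 ≤ c * δ / 8 * (s * m) := by positivity
      have hb' : b = Fb - δ := by rw [hδ]; ring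
      rw [hb'] at q1
      linarith
    have h1 := hmm.eventually hall
    have h2 := le_of_tendsto hlim h1
    have : 0 < c * δ / 8 := by positivity
    linarith
  · intro b hb
    obtain ⟨K, hK0, hK⟩ := hup ((b - Fb) / 4) (by linarith)
    have : Tendsto (fun n : ℕ => (b - Fb) / 4 * (n : ℝ)) atTop atTop :=
        tendsto_natCast_atTop_atTop.const_mul_atTop (by linarith)
    filter_upwards [eventually_ge_atTop 1, this.eventually_ge_atTop K] with n h1 h2
    have hn0 : (0 : ℝ) < n := by exact_mod_cast h1
    rw [div_lt_iff₀ hn0]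
    have := hK 1 n le_rfl
    nlinarith

lemma tendsto_of_close {u g : ℕ → ℝ} {Fb D : ℝ} (L : ℕ)
    (hclose : ∀ k, |u (k + L) - g k| ≤ D)
    (hg : Tendsto (fun n : ℕ => g n / n) atTop (𝓝 Fb)) :
    Tendsto (fun n : ℕ => u n / n) atTop (𝓝 Fb) := by
  rw [← tendsto_add_atTop_iff_nat L]
  have h1 : Tendsto (fun n : ℕ => (n : ℝ) / ((n : ℝ) + L)) atTop (𝓝 1) :=
    tendsto_natCast_div_add_atTop (L : ℝ)
  have h2 := hg.mul h1
  have h3 : Tendsto (fun k : ℕ => (u (k + L) - g k) / ((k + L : ℕ) : ℝ)) atTop (𝓝 0) := by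
    have h4 : Tendsto (fun k : ℕ => D / ((k + L : ℕ) : ℝ)) atTop (𝓝 0) :=
      (tendsto_add_atTop_iff_nat (f := fun n : ℕ => D / (n : ℝ)) L).2
        (tendsto_const_div_atTop_nhds_zero_nat D)
    apply squeeze_zero_norm _ h4
    intro k
    rw [Real.norm_eq_abs, abs_div, Nat.abs_cast]
    gcongr
    exact hclose k
  have h5 := h2.add h3
  rw [mul_one, add_zero] at h5
  refine h5.congr' ?_
  filter_upwards [eventually_ge_atTop 1] with k hk
  have hk0 : (k : ℝ) ≠ 0 := by positivity
  have hkL : (k : ℝ) + L ≠ 0 := by positivity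
  push_cast
  field_simp
  ring

lemma length_of_mem {Ω : Set (ℤ → 𝒜)} {n : ℕ} {x : List 𝒜} (h : x ∈ WordsN Ω n) :
    x.length = n := by
  obtain ⟨ω, _, k, rfl⟩ := h
  exact word_length _ _ _

open scoped Pointwise in
lemma asymp_exists {Ω : Set (ℤ → 𝒜)} (hne : Ω.Nonempty) (F : List 𝒜 → ℝ) {C : ℝ} (hC0 : 0 ≤ C)
    (hsub : ∀ (ω : ℤ → 𝒜) (a : ℤ) (m n : ℕ), ω ∈ Ω →
      F (word ω a (m + n)) ≤ F (word ω a m) + F (word ω (a + m) n))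
    (hF0 : ∀ n, ∀ x ∈ WordsN Ω n, 0 ≤ F x) (hFC : ∀ n, ∀ x ∈ WordsN Ω n, F x ≤ n * C) :
    ∃ Fb : ℝ, IsAsympMean Ω F Fb ∧ ∀ ε : ℝ, 0 < ε → ∃ K : ℝ, 0 ≤ K ∧
      ∀ n, ∀ x ∈ WordsN Ω n, F x ≤ (Fb + ε) * n + K := by
  obtain ⟨ω0, hω0⟩ := hne
  set u : ℕ → ℝ := fun n => sSup (F '' WordsN Ω n) with hu
  have hbdd : ∀ n, BddAbove (F '' WordsN Ω n) := by
    intro n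
    refine ⟨n * C, ?_⟩
    rintro _ ⟨x, hx, rfl⟩
    exact hFC n x hx
  have hWne : ∀ n, (WordsN Ω n).Nonempty := fun n => ⟨word ω0 0 n, ω0, hω0, 0, rfl⟩
  have hle : ∀ n, ∀ x ∈ WordsN Ω n, F x ≤ u n := fun n x hx => le_csSup (hbdd n) ⟨x, hx, rfl⟩
  have hu0 : ∀ n, 0 ≤ u n := by
    intro n
    obtain ⟨x, hx⟩ := hWne n
    exact (hF0 n x hx).trans (hle n x hx)
  have husub : Subadditive u := by
    intro m n
    apply csSup_le ((hWne _).image _)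
    rintro _ ⟨x, ⟨ω, hω, k, rfl⟩, rfl⟩
    exact (hsub ω k m n hω).trans (add_le_add (hle m _ ⟨ω, hω, k, rfl⟩)
      (hle n _ ⟨ω, hω, k + m, rfl⟩))
  have hlim := husub.tendsto_lim ⟨0, by rintro _ ⟨n, rfl⟩; exact div_nonneg (hu0 n) (by positivity)⟩
  have hFb0 : 0 ≤ husub.lim :=
    ge_of_tendsto' hlim (fun n => div_nonneg (hu0 n) (by positivity))
  refine ⟨husub.lim, ?_, ?_⟩
  · unfold IsAsympMean
    refine hlim.congr (fun n => ?_)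
    have e : (fun x => F x / (n : ℝ)) '' WordsN Ω n = (n : ℝ)⁻¹ • (F '' WordsN Ω n) := by
      rw [← Set.image_smul, Set.image_image]
      simp only [smul_eq_mul, div_eq_inv_mul]
    rw [e, Real.sSup_smul_of_nonneg (by positivity), smul_eq_mul, div_eq_inv_mul]
  · intro ε hε
    have := (tendsto_order.1 hlim).2 (husub.lim + ε) (by linarith)
    obtain ⟨n0, hn0⟩ := eventually_atTop.1 this
    refine ⟨n0 * C, by positivity, fun n x hx => ?_⟩
    have hp : 0 ≤ (husub.lim + ε) * n := by positivity
    have hq : 0 ≤ (n0 : ℝ) * C := by positivity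
    rcases le_or_gt n0 n with h | h
    · rcases Nat.eq_zero_or_pos n with rfl | h0
      · have := hFC 0 x hx
        simp only [Nat.cast_zero, zero_mul] at this
        linarith
      · have h1 := hn0 n h
        rw [div_lt_iff₀ (by exact_mod_cast h0)] at h1
        have := hle n x hx
        linarith
    · have h1 := hFC n x hx
      have : (n : ℝ) * C ≤ n0 * C := by gcongr
      linarith

/-- Letters of the leading words. -/
lemma lead_pos (p : ℤ → 𝒜) (v : List 𝒜) {n : ℤ} (h : 0 ≤ n) : leadWordGen p v n = p (n + 1) := by
  simp [leadWordGen, h]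

lemma lead_neg (p : ℤ → 𝒜) (v : List 𝒜) {n : ℤ} (h : n < -(v.length : ℤ)) :
    leadWordGen p v n = p (-(n + v.length)) := by
  rw [leadWordGen, if_neg (by omega), if_neg (by omega)]

lemma cube_period {w : List 𝒜} {ω : ℤ → 𝒜} {s : ℤ} (h : occursAt (w ++ w ++ w) ω s) {i : ℤ}
    (h1 : s ≤ i) (h2 : i < s + 2 * w.length) : ω i = ω (i + w.length) := by
  obtain ⟨q, rfl⟩ : ∃ q : ℕ, i = s + q := ⟨(i - s).toNat, by omega⟩
  unfold occursAt at h
  have hq : q < 2 * w.length := by omega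
  have key : ∀ t : ℕ, t < 3 * w.length → (w ++ w ++ w)[t]? = some (ω (s + t)) := by
    intro t ht
    rw [h, word_eq, List.getElem?_map,
      List.getElem?_range (by simp only [List.length_append]; omega)]
    rfl
  have k1 := key q (by omega)
  have k2 := key (q + w.length) (by omega)
  have k3 : (w ++ w ++ w)[q]? = (w ++ w ++ w)[q + w.length]? := by
    rw [List.append_assoc]
    conv_rhs => rw [List.getElem?_append_right (by omega)]
    rw [Nat.add_sub_cancel, ← List.append_assoc, List.getElem?_append_left (by simp; omega)]
  rw [k1, k2] at k3
  rw [Option.some_inj.1 k3]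
  congr 1
  push_cast; ring

lemma lead_reverse_mem {Ω : Set (ℤ → 𝒜)} (p : ℤ → 𝒜) (v : List 𝒜) (hmem : leadWordGen p v ∈ Ω)
    (w : ℕ → List 𝒜) (hw : Tendsto (fun k => (w k).length) atTop atTop)
    (hcube : ∀ k, occursAt (w k ++ w k ++ w k) (leadWordGen p v) (-((w k).length : ℤ)) ∨
        occursAt (w k ++ w k ++ w k) (leadWordGen p v) (-(2 * ((w k).length : ℤ))))
    (a : ℤ) (n : ℕ) : (word (leadWordGen p v) a n).reverse ∈ WordsN Ω n := by
  obtain ⟨k, hk⟩ := (hw.eventually_ge_atTop (a.natAbs + n + v.length)).exists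
  set M := (w k).length with hM
  rcases hcube k with h | h
  · refine ⟨_, hmem, -(v.length : ℤ) - (a + M + 1) - n + 1, ?_⟩
    apply word_reverse
    intro i hi
    rw [cube_period h (by omega) (by omega), lead_pos _ _ (by omega), lead_neg _ _ (by omega)]
    congr 1
    omega
  · refine ⟨_, hmem, -(a - M + n + v.length), ?_⟩
    apply word_reverse
    intro i hi
    have := cube_period h (i := a + (n - 1 - i : ℕ) - M) (by omega) (by omega)
    rw [← hM, sub_add_cancel] at this
    rw [← this, lead_neg _ _ (by omega), lead_pos _ _ (by omega)]
    congr 1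
    omega

noncomputable def Fsup (Ω : Set (ℤ → 𝒜)) (A : (ℤ → 𝒜) → SL2) (x : List 𝒜) : ℝ :=
  sSup {y | ∃ ω ∈ Ω, word ω 0 x.length = x ∧ y = sl_ell (cocycleP A x.length ω)}

section fs
variable [TopologicalSpace 𝒜] {Ω : Set (ℤ → 𝒜)} (hΩ : IsSubshift Ω)
  {A : (ℤ → 𝒜) → SL2} {C : ℝ} (hC0 : 0 ≤ C) (hC : ∀ ω ∈ Ω, sl_ell (A ω) ≤ C) {N : ℕ}
  (hN : ∀ ω ∈ Ω, ∀ ρ ∈ Ω, (∀ i : ℤ, |i| ≤ (N : ℤ) → ω i = ρ i) → A ω = A ρ)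

include hΩ hC in
lemma le_Fsup (ω : ℤ → 𝒜) (hω : ω ∈ Ω) (a : ℤ) (n : ℕ) :
    sl_ell (cocycleP A n (shift a ω)) ≤ Fsup Ω A (word ω a n) := by
  apply le_csSup
  · refine ⟨n * C, ?_⟩
    rintro _ ⟨ρ, hρ, _, rfl⟩
    have := ell_cocycleP_le hΩ hC (word ω a n).length ρ hρ
    rwa [word_length] at this ⊢
  · refine ⟨shift a ω, shift_mem_all hΩ a ω hω, ?_, ?_⟩ <;> rw [word_length]
    rw [word_shift, zero_add]

include hΩ in
lemma Fsup_le (ω : ℤ → 𝒜) (hω : ω ∈ Ω) (a : ℤ) (n : ℕ) {D : ℝ}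
    (h : ∀ ρ ∈ Ω, (∀ i : ℕ, i < n → ρ i = ω (a + i)) → sl_ell (cocycleP A n ρ) ≤ D) :
    Fsup Ω A (word ω a n) ≤ D := by
  apply csSup_le
  · refine ⟨_, shift a ω, shift_mem_all hΩ a ω hω, ?_, rfl⟩
    rw [word_length, word_shift, zero_add]
  · rintro _ ⟨ρ, hρ, h1, rfl⟩
    rw [word_length] at h1 ⊢
    apply h ρ hρ
    rw [word_ext] at h1
    simpa using h1

include hΩ hC in
lemma Fsup_sub (ω : ℤ → 𝒜) (a : ℤ) (m n : ℕ) (hω : ω ∈ Ω) :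
    Fsup Ω A (word ω a (m + n)) ≤ Fsup Ω A (word ω a m) + Fsup Ω A (word ω (a + m) n) := by
  apply Fsup_le hΩ ω hω
  intro ρ hρ h
  rw [cocycleP_add]
  have h1 := ell_mul_le (cocycleP A n (shift m ρ)) (cocycleP A m ρ)
  have h2 := le_Fsup hΩ hC ρ hρ m n
  have h3 := le_Fsup hΩ hC ρ hρ 0 m
  rw [shift_zero'] at h3
  have e1 : word ρ m n = word ω (a + m) n := by
    rw [word_ext]; intro i hi
    have := h (m + i) (by omega)
    push_cast at this
    rw [this, add_assoc]
  have e2 : word ρ 0 m = word ω a m := by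
    rw [word_ext]; intro i hi
    have := h i (by omega)
    simpa using this
  rw [e1] at h2
  rw [e2] at h3
  linarith

include hΩ hC in
lemma Fsup_bdd (n : ℕ) (x : List 𝒜) (hx : x ∈ WordsN Ω n) :
    0 ≤ Fsup Ω A x ∧ Fsup Ω A x ≤ n * C := by
  obtain ⟨ω, hω, k, rfl⟩ := hx
  exact ⟨(ell_nonneg _).trans (le_Fsup hΩ hC ω hω k n),
    Fsup_le hΩ ω hω k n (fun ρ hρ _ => ell_cocycleP_le hΩ hC n ρ hρ)⟩

include hΩ hC0 hC hN in
lemma Fsup_close (ω : ℤ → 𝒜) (hω : ω ∈ Ω) (a : ℤ) (n : ℕ) :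
    Fsup Ω A (word ω a n) ≤ sl_ell (cocycleP A n (shift a ω)) + 4 * N * C := by
  apply Fsup_le hΩ ω hω
  intro ρ hρ h
  apply compare_word hΩ hC0 hC hN n hρ (shift_mem_all hΩ a ω hω)
  intro i h1 h2
  lift i to ℕ using h1
  rw [h i (by omega), shift, add_comm]

end fs

section main
variable [Fintype 𝒜] [TopologicalSpace 𝒜] {Ω : Set (ℤ → 𝒜)}

lemma beta_part (hΩ : IsSubshift Ω)
    (p : ℤ → 𝒜) {r : ℕ} (vw : Fin r → List 𝒜)
    (lead : Fin r → (ℤ → 𝒜)) (hlead : ∀ j, lead j = leadWordGen p (vw j))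
    (hα : CondAlpha Ω lead)
    (hPQ : CondPQ p)
    (hβ' : ∀ F : List 𝒜 → ℝ, SubadditiveOn Ω F → ∀ Fb : ℝ, IsAsympMean Ω F Fb →
      ∃ m : ℕ → ℕ, Filter.Tendsto m Filter.atTop Filter.atTop ∧
        Filter.Tendsto (fun n : ℕ => F (word p 1 (m n)) / (m n)) Filter.atTop (nhds Fb))
    (hγ' : ∀ j : Fin r, ∃ w : ℕ → List 𝒜,
      Filter.Tendsto (fun k => (w k).length) Filter.atTop Filter.atTop ∧
      ∀ k, occursAt (w k ++ w k ++ w k) (lead j) (-((w k).length : ℤ)) ∨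
        occursAt (w k ++ w k ++ w k) (lead j) (-(2 * ((w k).length : ℤ)))) :
    CondBeta Ω lead := by
  intro A hA
  obtain ⟨C, hC0, hC⟩ := bounded_of_locConst hA
  obtain ⟨N, hN⟩ := hA
  obtain ⟨hmem, N0, hN0⟩ := hα
  -- closure under reversal
  have hrev : ∀ n, ∀ x ∈ WordsN Ω n, x.reverse ∈ WordsN Ω n := by
    rintro n _ ⟨ω, hω, k, rfl⟩
    have h1 : word ω k (n + N0) ∈ WordsN Ω (n + N0) := ⟨ω, hω, k, rfl⟩
    rw [hN0 _ (by omega)] at h1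
    obtain ⟨j, k', _, h2⟩ := h1
    have h3 : word ω k n = word (lead j) (1 - (k' : ℤ)) n := by
      rw [word_ext] at h2 ⊢
      exact fun i hi => h2 i (by omega)
    rw [h3, hlead j]
    obtain ⟨w, hw1, hw2⟩ := hγ' j
    rw [hlead j] at hw2
    exact lead_reverse_mem p (vw j) (hlead j ▸ hmem j) w hw1 hw2 _ _
  set F := Fsup Ω A with hF
  obtain ⟨Fb, hFb, hup⟩ := asymp_exists (Ω := Ω) hΩ.nonempty F hC0
    (fun ω a m n hω => Fsup_sub hΩ hC ω a m n hω)
    (fun n x hx => (Fsup_bdd hΩ hC n x hx).1) (fun n x hx => (Fsup_bdd hΩ hC n x hx).2)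
  refine ⟨Fb, fun j => ?_⟩
  have hpw : ∀ (a : ℤ) (n : ℕ), 1 ≤ a → word p a n = word (lead j) (a - 1) n := by
    intro a n ha
    rw [word_ext]
    intro i _
    rw [hlead j, lead_pos _ _ (by omega)]
    congr 1; ring
  have hprev : ∀ (a : ℤ) (n : ℕ), 1 ≤ a →
      (word p a n).reverse = word (lead j) (1 - ((vw j).length : ℤ) - a - n) n := by
    intro a n ha
    apply word_reverse
    intro i hi
    rw [hlead j, lead_neg _ _ (by omega)]
    congr 1
    omega
  have split : ∀ x y : List 𝒜, (x ++ y) ∈ Words Ω → ∃ ω ∈ Ω, ∃ k : ℤ,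
      x = word ω k x.length ∧ y = word ω (k + x.length) y.length ∧
      x ++ y = word ω k (x.length + y.length) := by
    rintro x y ⟨-, ω, hω, k, h⟩
    refine ⟨ω, hω, k, ?_⟩
    rw [List.length_append] at h
    have h' := h
    rw [word_add] at h'
    have := List.append_inj h' (by rw [word_length])
    exact ⟨this.1, this.2, h⟩
  have hsubF : SubadditiveOn Ω F := by
    intro x y _ _ hxy
    obtain ⟨ω, hω, k, h1, h2, h3⟩ := split x y hxy
    have := Fsup_sub (A := A) hΩ hC ω k x.length y.length hω
    rwa [← h1, ← h2, ← h3] at this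
  have hsubG : SubadditiveOn Ω (fun x => F x.reverse) := by
    intro x y _ _ hxy
    have hxy' : (y.reverse ++ x.reverse) ∈ Words Ω := by
      rw [← List.reverse_append]
      refine ⟨by rw [List.length_reverse]; exact hxy.1, ?_⟩
      rw [List.length_reverse]
      exact hrev _ _ hxy.2
    obtain ⟨ω, hω, k, h1, h2, h3⟩ := split _ _ hxy'
    have := Fsup_sub (A := A) hΩ hC ω k y.reverse.length x.reverse.length hω
    rw [← h1, ← h2, ← h3] at this
    simp only [List.reverse_append]
    linarith
  have hGb : IsAsympMean Ω (fun x => F x.reverse) Fb := by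
    unfold IsAsympMean at hFb ⊢
    refine hFb.congr (fun n => ?_)
    congr 1
    ext y
    constructor
    · rintro ⟨x, hx, rfl⟩
      exact ⟨x.reverse, hrev n x hx, by simp⟩
    · rintro ⟨x, hx, rfl⟩
      exact ⟨x.reverse, hrev n x hx, by simp⟩
  constructor
  · obtain ⟨mm, hm1, hm2⟩ := hβ' F hsubF Fb hFb
    have key := prefix_tendsto F p Fb
      (fun a m n ha => by
        have := Fsup_sub (A := A) hΩ hC (lead j) (a - 1) m n (hmem j)
        rw [hpw a _ ha, hpw a _ ha, hpw (a + m) n (by omega)]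
        rwa [show a + (m : ℤ) - 1 = a - 1 + m by ring])
      (fun ε hε => by
        obtain ⟨K, hK0, hK⟩ := hup ε hε
        exact ⟨K, hK0, fun a n ha => hK n _ ⟨lead j, hmem j, a - 1, hpw a n ha⟩⟩)
      hPQ mm hm1 hm2
    refine tendsto_of_close (D := 4 * N * C) 0 (fun k => ?_) key
    rw [add_zero, cocycle_nat, hpw 1 k le_rfl, sub_self]
    have h1 := le_Fsup hΩ hC (lead j) (hmem j) 0 k
    have h2 := Fsup_close hΩ hC0 hC hN (lead j) (hmem j) 0 k
    rw [shift_zero', ← hF] at h1 h2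
    unfold sl_ell at h1 h2
    rw [abs_le]; constructor <;> linarith [show 0 ≤ 4 * (N : ℝ) * C by positivity]
  · obtain ⟨mm, hm1, hm2⟩ := hβ' _ hsubG Fb hGb
    have key := prefix_tendsto (fun x => F x.reverse) p Fb
      (fun a m n ha => by
        have := Fsup_sub (A := A) hΩ hC (lead j) (1 - ((vw j).length : ℤ) - a - (m + n : ℕ)) n m
          (hmem j)
        rw [hprev a _ ha, hprev a _ ha, hprev (a + m) n (by omega), add_comm m n]
        rw [add_comm m n] at this
        rw [add_comm (F _)]
        convert this using 3
        · congr 1; push_cast; ring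
        · congr 1; push_cast; ring)
      (fun ε hε => by
        obtain ⟨K, hK0, hK⟩ := hup ε hε
        exact ⟨K, hK0, fun a n ha => hK n _ ⟨lead j, hmem j, _, hprev a n ha⟩⟩)
      hPQ mm hm1 hm2
    set L := (vw j).length with hL
    refine tendsto_of_close (D := 4 * N * C + L * C) L (fun k => ?_) key
    have e := cocycleP_add A k L (shift (-((k + L : ℕ) : ℤ)) (lead j))
    have b1 := le_Fsup hΩ hC (lead j) (hmem j) (-((k + L : ℕ) : ℤ)) k
    have b2 := Fsup_close hΩ hC0 hC hN (lead j) (hmem j) (-((k + L : ℕ) : ℤ)) k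
    have e2 : (word p 1 k).reverse = word (lead j) (-((k + L : ℕ) : ℤ)) k := by
      rw [hprev 1 k le_rfl]; congr 1; push_cast; ring
    change |sl_ell _ - F _| ≤ _
    rw [cocycle_neg, ell_inv, e2, e]
    set Q := cocycleP A k (shift (-((k + L : ℕ) : ℤ)) (lead j))
    have b3 := ell_cocycleP_le hΩ hC L _ (shift_mem_all hΩ k _
      (shift_mem_all hΩ (-((k + L : ℕ) : ℤ)) _ (hmem j)))
    set P := cocycleP A L (shift k (shift (-((k + L : ℕ) : ℤ)) (lead j)))
    have b4 := ell_mul_le P Q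
    have b5 := ell_mul_le P⁻¹ (P * Q)
    rw [inv_mul_cancel_left, ell_inv] at b5
    have b6 : 0 ≤ 4 * (N : ℝ) * C := by positivity
    have b7 : 0 ≤ (L : ℝ) * C := by positivity
    rw [← hF] at b1 b2
    rw [abs_le]; constructor <;> linarith

lemma decay_of_limsup {f : ℕ → ℝ} {D : ℝ} (hb : ∀ n : ℕ, Real.log (f n) ≤ D * n + D) (hD : 0 ≤ D)
    (hf0 : ∀ n, 0 ≤ f n)
    (h : limsup (fun n : ℕ => Real.log (f n) / n) atTop < 0) : Tendsto f atTop (𝓝 0) := by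
  obtain ⟨b, hb1, hb2⟩ := exists_between h
  have hev := eventually_lt_of_limsup_lt hb1 (isBoundedUnder_of ⟨D + D, fun n => by
    rcases Nat.eq_zero_or_pos n with rfl | h0
    · simp; linarith
    · have hn : (1 : ℝ) ≤ n := by exact_mod_cast h0
      rw [div_le_iff₀ (by linarith)]
      nlinarith [hb n]⟩)
  have hexp : Tendsto (fun n : ℕ => Real.exp (b * n)) atTop (𝓝 0) := by
    apply Real.tendsto_exp_atBot.comp
    exact tendsto_natCast_atTop_atTop.const_mul_atTop_of_neg hb2
  refine squeeze_zero' (Eventually.of_forall hf0) ?_ hexp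
  filter_upwards [hev, eventually_ge_atTop 1] with n h1 h2
  rw [div_lt_iff₀ (by exact_mod_cast h2)] at h1
  rcases (hf0 n).eq_or_lt with h3 | h3
  · rw [← h3]; positivity
  · rw [← Real.log_le_iff_le_exp h3]; exact h1.le

lemma gamma_part (hΩ : IsSubshift Ω) {r : ℕ} (lead : Fin r → (ℤ → 𝒜)) (hmem : ∀ j, lead j ∈ Ω)
    (hγ' : ∀ j : Fin r, ∃ w : ℕ → List 𝒜,
      Filter.Tendsto (fun k => (w k).length) Filter.atTop Filter.atTop ∧
      ∀ k, occursAt (w k ++ w k ++ w k) (lead j) (-((w k).length : ℤ)) ∨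
        occursAt (w k ++ w k ++ w k) (lead j) (-(2 * ((w k).length : ℤ)))) :
    CondGamma Ω lead := by
  rintro A hA j v hv ⟨hlp, hln⟩
  obtain ⟨C, hC0, hC⟩ := bounded_of_locConst hA
  obtain ⟨N, hN⟩ := hA
  obtain ⟨w, hw, hcube⟩ := hγ' j
  have hω := hmem j
  set ω := lead j
  have hinj : ∀ M : SL2, slAct M v ≠ 0 := by
    intro M h
    apply hv
    have : slAct M⁻¹ (slAct M v) = v := by rw [← slAct_mul, inv_mul_cancel, slAct_one]
    rw [← this, h]
    simp [slAct]
  have hlog : ∀ M : SL2, ∀ n : ℕ, sl_ell M ≤ n * C →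
      Real.log ‖slAct M v‖ ≤ (C + |Real.log ‖v‖|) * n + (C + |Real.log ‖v‖|) := by
    intro M n hM
    have h1 := slAct_le_exp M v hM
    have h2 : Real.log ‖slAct M v‖ ≤ Real.log (Real.exp (n * C) * ‖v‖) :=
      Real.log_le_log (norm_pos_iff.2 (hinj M)) h1
    rw [Real.log_mul (Real.exp_ne_zero _) (norm_ne_zero_iff.2 hv), Real.log_exp] at h2
    have h3 := le_abs_self (Real.log ‖v‖)
    have h4 : 0 ≤ |Real.log ‖v‖| * n := by positivity
    linarith
  have dp : Tendsto (fun n : ℕ => ‖slAct (cocycle A n ω) v‖) atTop (𝓝 0) := by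
    refine decay_of_limsup (D := C + |Real.log ‖v‖|) (fun n => hlog _ n ?_) (by positivity)
      (fun n => norm_nonneg _) hlp
    rw [cocycle_nat]
    exact ell_cocycleP_le hΩ hC n ω hω
  have dn : Tendsto (fun n : ℕ => ‖slAct (cocycle A (-(n : ℤ)) ω) v‖) atTop (𝓝 0) := by
    refine decay_of_limsup (D := C + |Real.log ‖v‖|) (fun n => hlog _ n ?_) (by positivity)
      (fun n => norm_nonneg _) hln
    rw [cocycle_neg, ell_inv]
    exact ell_cocycleP_le hΩ hC n _ (shift_mem_all hΩ _ ω hω)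
  set κ := Real.exp (2 * N * C) with hκ
  have hκ1 : 1 ≤ κ := Real.one_le_exp (by positivity)
  have hE : ∀ (E : SL2) (u : EuclideanSpace ℝ (Fin 2)), sl_ell E ≤ 2 * N * C →
      ‖u‖ ≤ κ * ‖slAct E u‖ := by
    intro E u hE
    have h1 := slAct_le_exp E⁻¹ (slAct E u) (D := 2 * N * C) (by rw [ell_inv]; exact hE)
    rwa [← slAct_mul, inv_mul_cancel, slAct_one] at h1
  have hmain : ∀ k, N ≤ (w k).length → ‖v‖ ≤ κ * (‖slAct (cocycle A (w k).length ω) v‖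
      + ‖slAct (cocycle A (2 * (w k).length : ℕ) ω) v‖
      + ‖slAct (cocycle A (-((w k).length : ℤ)) ω) v‖
      + ‖slAct (cocycle A (-((2 * (w k).length : ℕ) : ℤ)) ω) v‖) := by
    intro k hk
    have hcu := hcube k
    have hper : ∀ (s i : ℤ), occursAt (w k ++ w k ++ w k) ω s → s ≤ i →
        i < s + 2 * (w k).length → ω i = ω (i + (w k).length) :=
      fun s i h h1 h2 => cube_period h h1 h2
    set L := (w k).length with hL
    clear_value L
    rw [cocycle_neg, cocycle_neg, cocycle_nat, cocycle_nat, two_mul, cocycleP_add, cocycleP_add,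
      shift_shift]
    rw [show (L : ℤ) + -((L + L : ℕ) : ℤ) = -(L : ℤ) by push_cast; ring]
    have s1 := shift_mem_all hΩ (-(L : ℤ)) ω hω
    have s2 := shift_mem_all hΩ (-((L + L : ℕ) : ℤ)) ω hω
    have s3 := shift_mem_all hΩ (L : ℤ) ω hω
    rcases hcu with h | h
    · obtain ⟨E, hE1, hE2⟩ := compareR hΩ hC hN hk hω s3 (fun i h1 h2 =>
        hper _ i h (by omega) (by omega))
      obtain ⟨E', hE1', hE2'⟩ := compareL hΩ hC hN hk hω s1 (fun i h1 h2 => by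
        have := hper _ (i - L) h (by omega) (by omega)
        rw [sub_add_cancel] at this
        rw [← this, shift, sub_eq_add_neg])
      rw [hE2, hE2']
      set M := cocycleP A L ω
      have g := gordon M v
      have g1 := hE E (slAct (M * M) v) hE1
      have g2 := hE E'⁻¹ (slAct M⁻¹ v) (by rw [ell_inv]; exact hE1')
      rw [← slAct_mul] at g1 g2
      rw [mul_inv_rev M E', mul_assoc E M M]
      have n1 : ‖slAct M v‖ ≤ κ * ‖slAct M v‖ := le_mul_of_one_le_left (norm_nonneg _) hκ1
      have n2 : 0 ≤ κ * ‖slAct (M * E' * cocycleP A L (shift (-((L + L : ℕ) : ℤ)) ω))⁻¹ v‖ := by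
        positivity
      linarith
    · obtain ⟨E, hE1, hE2⟩ := compareR hΩ hC hN hk s1 hω (fun i h1 h2 => by
        have := hper _ (i - L) h (by omega) (by omega)
        rw [sub_add_cancel] at this
        rw [← this, shift, sub_eq_add_neg])
      obtain ⟨E', hE1', hE2'⟩ := compareL hΩ hC hN hk s1 s2 (fun i h1 h2 => by
        have := hper _ (i - L - L) h (by omega) (by omega)
        rw [sub_add_cancel] at this
        simp only [shift]
        rw [← sub_eq_add_neg, ← this]
        congr 1; push_cast; ring)
      rw [hE2, hE2']
      set B := cocycleP A L (shift (-(L : ℤ)) ω)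
      have g := gordon B⁻¹ v
      rw [inv_inv] at g
      have g1 := hE E (slAct B v) hE1
      have g2 := hE E'⁻¹ (slAct (B⁻¹ * B⁻¹) v) (by rw [ell_inv]; exact hE1')
      rw [← slAct_mul] at g1 g2
      rw [show (B * (B * E'))⁻¹ = E'⁻¹ * (B⁻¹ * B⁻¹) by group]
      have n1 : ‖slAct B⁻¹ v‖ ≤ κ * ‖slAct B⁻¹ v‖ := le_mul_of_one_le_left (norm_nonneg _) hκ1
      have n2 : 0 ≤ κ * ‖slAct (cocycleP A L (shift (L : ℤ) ω) * (E * B)) v‖ := by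
        positivity
      linarith
  have hw2 : Tendsto (fun k => 2 * (w k).length) atTop atTop :=
    tendsto_atTop_mono (fun k => by omega) hw
  have t := ((((dp.comp hw).add (dp.comp hw2)).add (dn.comp hw)).add (dn.comp hw2)).const_mul κ
  simp only [add_zero, mul_zero] at t
  have := ge_of_tendsto t ((hw.eventually_ge_atTop N).mono (fun k hk => hmain k hk))
  exact hv (norm_le_zero_iff.1 this)

end main

end S11

/-- **Sufficient condition for (LSC).** If the leading words `p^R v^(j) | p`
satisfy (α'), (β'), (γ'), then the uniquely ergodic subshift satisfies (β), (γ) and (LSC). -/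
theorem statement11 {𝒜 : Type*} [Fintype 𝒜] [TopologicalSpace 𝒜] [DiscreteTopology 𝒜]
    {Ω : Set (ℤ → 𝒜)} (hΩ : IsSubshift Ω) (hue : UniformWordFreq Ω)
    (p : ℤ → 𝒜) {r : ℕ} (vw : Fin r → List 𝒜)
    (lead : Fin r → (ℤ → 𝒜)) (hlead : ∀ j, lead j = leadWordGen p (vw j))
    -- (α'): the leading words belong to Ω and condition (α) holds
    (hα : CondAlpha Ω lead)
    -- (β'): `p` satisfies (PQ) and every subadditive `F` attains its asymptotic mean
    -- along a sequence of prefixes of `p`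
    (hPQ : CondPQ p)
    (hβ' : ∀ F : List 𝒜 → ℝ, SubadditiveOn Ω F → ∀ Fb : ℝ, IsAsympMean Ω F Fb →
      ∃ m : ℕ → ℕ, Filter.Tendsto m Filter.atTop Filter.atTop ∧
        Filter.Tendsto (fun n : ℕ => F (word p 1 (m n)) / (m n)) Filter.atTop (nhds Fb))
    -- (γ'): each leading word begins with cubes of unbounded length around the origin
    (hγ' : ∀ j : Fin r, ∃ w : ℕ → List 𝒜,
      Filter.Tendsto (fun k => (w k).length) Filter.atTop Filter.atTop ∧
      ∀ k, occursAt (w k ++ w k ++ w k) (lead j) (-((w k).length : ℤ)) ∨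
        occursAt (w k ++ w k ++ w k) (lead j) (-(2 * ((w k).length : ℤ)))) :
    CondBeta Ω lead ∧ CondGamma Ω lead ∧ SatisfiesLSC Ω := by
  have hB := beta_part hΩ p vw lead hlead hα hPQ hβ' hγ'
  have hG := gamma_part hΩ lead hα.1 hγ'
  exact ⟨hB, hG, r, lead, hα, hB, hG⟩
end

section
/- Let Ω be the simple Toeplitz subshift defined by coding sequences (a_k) and (n_k), with eventual alphabet Ã = {a^(1),…,a^(r)} of cardinality at least 2 and leading words ω^(1),…,ω^(r). Then for every j ∈ {1,…,r} there is a sequence (w_i) of finite words with |w_i| → ∞ such that for every i: ω^(j)(−2|w_i|)⋯ω^(j)(−1) = w_i w_i and ω^(j)(0)⋯ω^(j)(|w_i|−1) = w_i, i.e., ω^(j) = ⋯ w_i w_i | w_i ⋯ around the origin. -/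
open Filter Topology MeasureTheory

theorem word_eq13 {α : Type*} (ω : ℤ → α) (k : ℤ) (n : ℕ) :
    word ω k n = (List.range n).map (fun i : ℕ => ω (k + (i : ℤ))) := by
  unfold word
  simp [List.map_flatMap, ← List.map_eq_flatMap]

theorem flat_comm13 {α : Type*} (x : List α) (l : α) (m : ℕ) :
    (List.replicate m (x ++ [l])).flatten ++ x = x ++ (List.replicate m (l :: x)).flatten := by
  induction m with
  | zero => simp
  | succ m ih => simp [List.replicate_succ, ih]

theorem blk_pal13 {α : Type*} (a : ℕ → α) (n : ℕ → ℕ) (k : ℕ) :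
    (Blk a n k).reverse = Blk a n k := by
  induction k with
  | zero => simp [Blk]
  | succ k ih =>
    simp only [Blk, sepJoin]
    rw [List.reverse_append, List.reverse_flatten, List.map_replicate, List.reverse_replicate,
      List.reverse_append, ih, flat_comm13]
    simp

theorem blk_succ13 {α : Type*} (a : ℕ → α) (n : ℕ → ℕ) (k : ℕ) (hn : 2 ≤ n k) :
    ∃ t, Blk a n (k + 1) = Blk a n k ++ a k :: (Blk a n k ++ t) := by
  obtain ⟨m, hm⟩ := Nat.exists_eq_add_of_le' hn
  refine ⟨(List.replicate m (a k :: Blk a n k)).flatten, ?_⟩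
  simp only [Blk, sepJoin]
  rw [flat_comm13, hm]
  simp [List.replicate_succ]

theorem blk_len13 {α : Type*} (a : ℕ → α) (n : ℕ → ℕ) (hn : ∀ k, 2 ≤ n k) (k : ℕ) :
    k ≤ (Blk a n k).length := by
  induction k with
  | zero => simp
  | succ k ih =>
    obtain ⟨t, ht⟩ := blk_succ13 a n k (hn k)
    rw [ht]; simp; omega

theorem blk_get13 {α : Type*} {a : ℕ → α} {n : ℕ → ℕ} {p : ℤ → α} (hp : IsBlockInf a n p)
    (k i : ℕ) (hi : i < (Blk a n k).length) : (Blk a n k)[i]? = some (p (1 + i)) := by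
  rw [← hp k]
  simp [word_eq13, hi]

theorem three13 {α : Type*} (a : ℕ → α) (n : ℕ → ℕ) (hn : ∀ k, 2 ≤ n k) (p : ℤ → α)
    (hp : IsBlockInf a n p) (k : ℕ) :
    ∃ L : ℕ, k ≤ L ∧ p (1 + L) = a k ∧ (∀ i : ℕ, i < L → p (L + 2 + i) = p (1 + i)) ∧
      (∀ i : ℕ, i < L → p (L - i) = p (1 + i)) := by
  obtain ⟨t, ht⟩ := blk_succ13 a n k (hn k)
  have hlen : (Blk a n (k+1)).length = 2 * (Blk a n k).length + 1 + t.length := by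
    rw [ht]; simp; omega
  refine ⟨(Blk a n k).length, blk_len13 a n hn k, ?_, ?_, ?_⟩
  · have := blk_get13 hp (k+1) (Blk a n k).length (by omega)
    rw [ht] at this
    simpa using this.symm
  · intro i hi
    have h1 := blk_get13 hp (k+1) ((Blk a n k).length + 1 + i) (by omega)
    have h2 := blk_get13 hp k i hi
    rw [ht, List.getElem?_append_right (by omega),
      show (Blk a n k).length + 1 + i - (Blk a n k).length = i + 1 by omega,
      List.getElem?_cons_succ, List.getElem?_append_left hi, h2] at h1
    rw [Option.some.inj h1]
    congr 1; push_cast; ring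
  · intro i hi
    have h1 := blk_get13 hp k ((Blk a n k).length - 1 - i) (by omega)
    have h2 := blk_get13 hp k i hi
    rw [← List.getElem?_reverse hi, blk_pal13, h2] at h1
    rw [Option.some.inj h1]
    congr 1; omega

/-- **Occurrences of three blocks.** Every leading word `ω^(j)` of a
simple Toeplitz subshift with eventual alphabet of cardinality ≥ 2 looks like
`⋯ w_i w_i | w_i ⋯` around the origin for words `w_i` of unbounded length. -/
theorem statement13 {𝒜 : Type*} [Fintype 𝒜]
    (a : ℕ → 𝒜) (nseq : ℕ → ℕ) (ha : ∀ k, a (k + 1) ≠ a k) (hn : ∀ k, 2 ≤ nseq k)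
    (p : ℤ → 𝒜) (hp : IsBlockInf a nseq p)
    {r : ℕ} (aj : Fin r → 𝒜) (haj : ∀ x : 𝒜, x ∈ EvAlph a ↔ ∃ j, aj j = x)
    (hcard : ∃ x y : 𝒜, x ∈ EvAlph a ∧ y ∈ EvAlph a ∧ x ≠ y) :
    ∀ j : Fin r, ∃ w : ℕ → List 𝒜,
      Filter.Tendsto (fun i => (w i).length) Filter.atTop Filter.atTop ∧
      ∀ i : ℕ,
        word (leadWordGen p [aj j]) (-(2 * ((w i).length : ℤ))) (2 * (w i).length)
          = w i ++ w i ∧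
        word (leadWordGen p [aj j]) 0 (w i).length = w i := by
  intro j
  have hj : aj j ∈ EvAlph a := (haj _).2 ⟨j, rfl⟩
  choose K hK hKa using hj
  choose L hL h1 h2 h3 using fun i => three13 a nseq hn p hp (K i)
  refine ⟨fun i => word p 1 (L i + 1), ?_, ?_⟩
  · refine Filter.tendsto_atTop_mono (fun i => ?_) Filter.tendsto_id
    have := hK i
    have := hL i
    simp [word_eq13]; omega
  · intro i
    have hl : (word p 1 (L i + 1)).length = L i + 1 := by simp [word_eq13]
    have g1 := (h1 i).trans (hKa i)
    have g2 := h2 i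
    have g3 := h3 i
    simp only [hl]
    generalize L i = M at *
    constructor
    · rw [show 2 * (M + 1) = (M + 1) + (M + 1) by ring]
      simp only [word_eq13]
      rw [List.range_add, List.map_append, List.map_map]
      congr 1
      · apply List.map_congr_left
        intro t ht
        rw [List.mem_range] at ht
        unfold leadWordGen
        rw [if_neg (by push_cast; omega), if_neg (by simp; omega)]
        rcases Nat.lt_succ_iff_lt_or_eq.1 ht with h | h
        · rw [← g3 t h]
          have := g2 (M - 1 - t) (by omega)
          rw [show (1 + ((M - 1 - t : ℕ) : ℤ)) = M - t by omega] at this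
          rw [← this]
          congr 1; simp; omega
        · subst h
          congr 1; simp; omega
      · apply List.map_congr_left
        intro t ht
        rw [List.mem_range] at ht
        unfold leadWordGen
        simp only [Function.comp]
        rw [if_neg (by push_cast; omega)]
        rcases Nat.lt_succ_iff_lt_or_eq.1 ht with h | h
        · rw [if_neg (by simp; omega), ← g3 t h]
          congr 1; simp; omega
        · subst h
          rw [if_pos (by simp; omega), g1]
          have : (-(2 * ((t + 1 : ℕ) : ℤ)) + ((t + 1 + t : ℕ) : ℤ) + (([aj j] : List 𝒜).length : ℤ)).toNat = 0 := by
            simp; omega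
          rw [this]; rfl
    · simp only [word_eq13]
      apply List.map_congr_left
      intro t ht
      unfold leadWordGen
      rw [if_pos (by omega)]
      congr 1; ring
end

section
/- Let block(∞) be the one-sided infinite word of a simple Toeplitz subshift defined by coding sequences (a_k) and (n_k). Then for every prefix v of block(∞), liminf_{L→∞} (|v|/L)·#̃_v(block(∞)(1)⋯block(∞)(L)) ≥ 1/8; in particular, block(∞) satisfies condition (PQ). -/
open Filter Topology MeasureTheory

theorem tz_rep {α : Type*} (y z : List α) (c : ℕ) : ∀ u s, u < c → s < y.length →
    ((List.replicate c y).flatten ++ z)[u * y.length + s]? = y[s]? := by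
  induction c with
  | zero => intro u s h; omega
  | succ c ih =>
    intro u s hu hs
    rw [List.replicate_succ, List.flatten_cons, List.append_assoc]
    cases u with
    | zero => rw [Nat.zero_mul, Nat.zero_add, List.getElem?_append_left hs]
    | succ u =>
      have e : (u + 1) * y.length + s = y.length + (u * y.length + s) := by ring
      rw [e, List.getElem?_append_right (by omega), Nat.add_sub_cancel_left]
      exact ih u s (by omega) hs

theorem tz_rep_last {α : Type*} (y z : List α) (c s : ℕ) :
    ((List.replicate c y).flatten ++ z)[c * y.length + s]? = z[s]? := by
  have hl : ((List.replicate c y).flatten).length = c * y.length := by simp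
  rw [List.getElem?_append_right (by omega), hl, Nat.add_sub_cancel_left]

def tzq (nseq : ℕ → ℕ) : ℕ → ℕ
  | 0 => 1
  | k + 1 => nseq k * tzq nseq k

theorem tz_len {α : Type*} (a : ℕ → α) (nseq : ℕ → ℕ) (hn : ∀ k, 2 ≤ nseq k) (k : ℕ) :
    (Blk a nseq k).length + 1 = tzq nseq k := by
  induction k with
  | zero => simp [Blk, tzq]
  | succ k ih =>
    obtain ⟨c, hc⟩ := Nat.exists_eq_add_of_le (hn k)
    simp only [Blk, tzq, sepJoin, List.length_append, List.length_flatten, List.map_replicate,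
      List.sum_replicate, List.length_singleton, ih, hc]
    have : 2 + c - 1 = c + 1 := by omega
    rw [this, smul_eq_mul, ← ih]; ring

theorem tz_word_eq {α : Type*} (p : ℤ → α) (k : ℤ) (n : ℕ) :
    word p k n = (List.range n).map (fun i : ℕ => p (k + (i : ℤ))) := by
  unfold word
  rw [bind_pure_comp, List.map_eq_map, List.map_map]
  rfl

theorem tz_word {α : Type*} (p : ℤ → α) (k : ℤ) (n j : ℕ) (h : j < n) :
    (word p k n)[j]? = some (p (k + j)) := by
  rw [tz_word_eq]; simp [h]

theorem tz_get {α : Type*} (a : ℕ → α) (nseq : ℕ → ℕ) (hn : ∀ k, 2 ≤ nseq k) (p : ℤ → α)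
    (hp : IsBlockInf a nseq p) (k i : ℕ) (h : i + 1 < tzq nseq k) :
    (Blk a nseq k)[i]? = some (p ((i + 1 : ℕ) : ℤ)) := by
  have := tz_len a nseq hn k
  rw [← hp k, tz_word _ _ _ _ (by omega)]
  push_cast; rw [add_comm]

theorem tz_A {α : Type*} (a : ℕ → α) (nseq : ℕ → ℕ) (hn : ∀ k, 2 ≤ nseq k) (p : ℤ → α)
    (hp : IsBlockInf a nseq p) (k u s : ℕ) (hu : u < nseq k) (hs : s + 1 < tzq nseq k) :
    p ((u * tzq nseq k + (s + 1) : ℕ) : ℤ) = p ((s + 1 : ℕ) : ℤ) := by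
  have hl := tz_len a nseq hn k
  have hlt : u * tzq nseq k + s + 1 < tzq nseq (k + 1) := by
    have : (u + 1) * tzq nseq k ≤ nseq k * tzq nseq k := Nat.mul_le_mul_right _ hu
    simp only [tzq]; nlinarith
  have h1 := tz_get a nseq hn p hp (k + 1) (u * tzq nseq k + s) hlt
  have h2 := tz_get a nseq hn p hp k s hs
  have hy : (Blk a nseq k ++ [a k]).length = tzq nseq k := by simp [hl]
  have h3 : (Blk a nseq (k + 1))[u * tzq nseq k + s]? = (Blk a nseq k)[s]? := by
    simp only [Blk, sepJoin]
    rcases Nat.lt_or_ge u (nseq k - 1) with h | h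
    · rw [← hy, tz_rep _ _ _ _ _ h (by omega), List.getElem?_append_left (by omega)]
    · have : u = nseq k - 1 := by omega
      rw [← hy, this, tz_rep_last]
  rw [h1, h2] at h3
  exact Option.some.inj h3

theorem tz_B {α : Type*} (a : ℕ → α) (nseq : ℕ → ℕ) (hn : ∀ k, 2 ≤ nseq k) (p : ℤ → α)
    (hp : IsBlockInf a nseq p) (k u : ℕ) (hu : u + 1 < nseq k) :
    p (((u + 1) * tzq nseq k : ℕ) : ℤ) = a k := by
  have hl := tz_len a nseq hn k
  have e : (u + 1) * tzq nseq k = u * tzq nseq k + (Blk a nseq k).length + 1 := by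
    rw [← hl]; ring
  have hlt : u * tzq nseq k + (Blk a nseq k).length + 1 < tzq nseq (k + 1) := by
    rw [← e]; simp only [tzq]
    exact Nat.mul_lt_mul_of_pos_right hu (by omega)
  have h1 := tz_get a nseq hn p hp (k + 1) _ hlt
  have hy : (Blk a nseq k ++ [a k]).length = tzq nseq k := by simp [hl]
  have h3 : (Blk a nseq (k + 1))[u * tzq nseq k + (Blk a nseq k).length]? = some (a k) := by
    simp only [Blk, sepJoin]
    rw [← hy, tz_rep _ _ _ _ _ (by omega) (by omega)]
    simp
  rw [h1] at h3
  rw [e]; exact Option.some.inj h3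

theorem tz_pos (nseq : ℕ → ℕ) (hn : ∀ k, 2 ≤ nseq k) (k : ℕ) : k < tzq nseq k := by
  induction k with
  | zero => simp [tzq]
  | succ k ih => simp only [tzq]; nlinarith [hn k]

theorem tz_C {α : Type*} (a : ℕ → α) (nseq : ℕ → ℕ) (hn : ∀ k, 2 ≤ nseq k) (p : ℤ → α)
    (hp : IsBlockInf a nseq p) (k d : ℕ) : ∀ x : ℕ, x < tzq nseq (k + d) → x % tzq nseq k ≠ 0 →
    tzq nseq k ∣ tzq nseq (k + d) ∧ p (x : ℤ) = p ((x % tzq nseq k : ℕ) : ℤ) := by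
  induction d with
  | zero => intro x h _; exact ⟨dvd_rfl, by rw [Nat.mod_eq_of_lt (show x < tzq nseq k from h)]⟩
  | succ d ih =>
    intro x h h0
    have hq := tz_pos nseq hn (k + d)
    have hlt : x % tzq nseq (k + d) < tzq nseq (k + d) := Nat.mod_lt _ (by omega)
    have hdv : tzq nseq k ∣ tzq nseq (k + d) := by
      clear ih h hq hlt
      induction d with
      | zero => exact dvd_rfl
      | succ d ih => exact Dvd.dvd.mul_left ih (nseq (k + d))
    have hm : x % tzq nseq (k + d) % tzq nseq k = x % tzq nseq k := Nat.mod_mod_of_dvd _ hdv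
    have h1 := ih (x % tzq nseq (k + d)) hlt (by rw [hm]; exact h0)
    rw [hm] at h1
    refine ⟨Dvd.dvd.mul_left hdv (nseq (k + d)), ?_⟩
    rw [← h1.2]
    have hne : x % tzq nseq (k + d) ≠ 0 := by
      intro h'; rw [h'] at hm; simp at hm; exact h0 hm.symm
    obtain ⟨s, hs⟩ := Nat.exists_eq_succ_of_ne_zero hne
    have hA := tz_A a nseq hn p hp (k + d) (x / tzq nseq (k + d)) s
      (Nat.div_lt_of_lt_mul (by rw [mul_comm]; exact h)) (by omega)
    have hs' : s + 1 = x % tzq nseq (k + d) := hs.symm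
    rw [hs', Nat.div_add_mod'] at hA
    exact hA

theorem tz_D {α : Type*} (a : ℕ → α) (nseq : ℕ → ℕ) (hn : ∀ k, 2 ≤ nseq k) (p : ℤ → α)
    (hp : IsBlockInf a nseq p) (k x : ℕ) (h0 : x % tzq nseq k ≠ 0) :
    p (x : ℤ) = p ((x % tzq nseq k : ℕ) : ℤ) :=
  (tz_C a nseq hn p hp k x x (lt_of_le_of_lt (Nat.le_add_left _ _) (tz_pos nseq hn (k + x))) h0).2

theorem tz_E {α : Type*} (a : ℕ → α) (nseq : ℕ → ℕ) (hn : ∀ k, 2 ≤ nseq k) (p : ℤ → α)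
    (hp : IsBlockInf a nseq p) (k t w i : ℕ) (hi : 1 ≤ i)
    (h : w * tzq nseq k + i < tzq nseq (k + 1)) :
    p ((t * tzq nseq (k + 1) + (w * tzq nseq k + i) : ℕ) : ℤ) = p (i : ℤ) := by
  have hm : (t * tzq nseq (k + 1) + (w * tzq nseq k + i)) % tzq nseq (k + 1)
      = w * tzq nseq k + i := by
    rw [Nat.mul_add_mod', Nat.mod_eq_of_lt h]
  rw [tz_D a nseq hn p hp (k + 1) _ (by omega), hm]
  have hm2 : (w * tzq nseq k + i) % tzq nseq k = i % tzq nseq k := by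
    rw [Nat.mul_add_mod']
  have hq := tz_pos nseq hn k
  by_cases hz : i % tzq nseq k = 0
  · obtain ⟨c, hc⟩ := Nat.dvd_of_mod_eq_zero hz
    have hc0 : c ≠ 0 := by rintro rfl; simp at hc; omega
    obtain ⟨c, rfl⟩ := Nat.exists_eq_succ_of_ne_zero hc0
    have e1 : w * tzq nseq k + i = (w + c + 1) * tzq nseq k := by rw [hc, Nat.succ_eq_add_one]; ring
    have e2 : i = (c + 1) * tzq nseq k := by rw [hc, Nat.succ_eq_add_one]; ring
    have hlt : w + c + 1 < nseq k := by
      rw [e1] at h; exact lt_of_mul_lt_mul_right h (Nat.zero_le _)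
    rw [e1, tz_B a nseq hn p hp k _ hlt, e2, tz_B a nseq hn p hp k _ (by omega)]
  · rw [tz_D a nseq hn p hp k _ (by rw [hm2]; exact hz), hm2, ← tz_D a nseq hn p hp k _ hz]

theorem tz_card_le {α : Type*} (v : List α) (p : ℤ → α) (L : ℕ) (hv : 1 ≤ v.length) (m : ℕ)
    (hm : ∃ S : Finset ℤ, S.card = m ∧
    (∀ k ∈ S, 1 ≤ k ∧ k + v.length ≤ (L : ℤ) + 1 ∧ occursAt v p k) ∧
    (∀ k ∈ S, ∀ l ∈ S, k ≠ l → (v.length : ℤ) ≤ |k - l|)) : m ≤ L := by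
  obtain ⟨S, rfl, h, -⟩ := hm
  have : S ⊆ Finset.Icc (1 : ℤ) L := by
    intro k hk
    obtain ⟨h1, h2, -⟩ := h k hk
    rw [Finset.mem_Icc]; omega
  simpa using Finset.card_le_card this

theorem tz_count {α : Type*} (a : ℕ → α) (nseq : ℕ → ℕ) (hn : ∀ k, 2 ≤ nseq k) (p : ℤ → α)
    (hp : IsBlockInf a nseq p) (k m w c T L : ℕ) (hm : 1 ≤ m)
    (hP : m ≤ w * tzq nseq k) (hm' : m < tzq nseq (k + 1))
    (hc : c * (w * tzq nseq k) ≤ tzq nseq (k + 1))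
    (hT : T * tzq nseq (k + 1) ≤ L) (hstrict : m < w * tzq nseq k) :
    T * c ≤ disjCount (word p 1 m) p L := by
  have hlen : (word p 1 m).length = m := by simp [word]
  unfold disjCount
  apply le_csSup
  · exact ⟨L, fun x hx => tz_card_le _ p L (by rw [hlen]; exact hm) x hx⟩
  rw [hlen]
  set P := w * tzq nseq k with hPdef
  set Q := tzq nseq (k + 1) with hQdef
  let g : ℕ × ℕ → ℤ := fun x => ((x.1 * Q + x.2 * P : ℕ) : ℤ) + 1
  have hj : ∀ j < c, j * P + P ≤ Q := by
    intro j hj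
    have : (j + 1) * P ≤ c * P := Nat.mul_le_mul_right _ hj
    nlinarith
  have key : ∀ x ∈ (Finset.range T ×ˢ Finset.range c), ∀ y ∈ (Finset.range T ×ˢ Finset.range c),
      x ≠ y → (m : ℤ) ≤ |g x - g y| := by
    have aux : ∀ t j t' j' : ℕ, j < c → j' < c → (t < t' ∨ t = t' ∧ j < j') →
        t * Q + j * P + P ≤ t' * Q + j' * P := by
      intro t j t' j' h1 h2 h
      rcases h with h | ⟨rfl, h⟩
      · have : (t + 1) * Q ≤ t' * Q := Nat.mul_le_mul_right _ h
        have := hj j h1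
        nlinarith
      · have : (j + 1) * P ≤ j' * P := Nat.mul_le_mul_right _ h
        nlinarith
    rintro ⟨t, j⟩ hx ⟨t', j'⟩ hy hne
    simp only [Finset.mem_product, Finset.mem_range] at hx hy
    have hcases : (t < t' ∨ t = t' ∧ j < j') ∨ (t' < t ∨ t' = t ∧ j' < j) := by
      by_contra hcon
      apply hne
      ext <;> simp <;> omega
    simp only [g]
    rcases hcases with h | h
    · have := aux t j t' j' hx.2 hy.2 h
      rw [abs_sub_comm]
      refine le_trans ?_ (le_abs_self _)
      omega
    · have := aux t' j' t j hy.2 hx.2 h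
      refine le_trans ?_ (le_abs_self _)
      omega
  refine ⟨(Finset.range T ×ˢ Finset.range c).image g, ?_, ?_, ?_⟩
  · rw [Finset.card_image_of_injOn, Finset.card_product, Finset.card_range, Finset.card_range]
    intro x hx y hy hxy
    by_contra hne
    have := key x hx y hy hne
    rw [hxy] at this
    simp at this
    omega
  · intro z hz
    rw [Finset.mem_image] at hz
    obtain ⟨⟨t, j⟩, hx, rfl⟩ := hz
    simp only [Finset.mem_product, Finset.mem_range] at hx
    have h1 := hj j hx.2
    have h2 : (t + 1) * Q ≤ T * Q := Nat.mul_le_mul_right _ hx.1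
    have h3 : (t + 1) * Q = t * Q + Q := by ring
    refine ⟨by simp only [g]; omega, by simp only [g]; omega, ?_⟩
    unfold occursAt
    rw [hlen]
    rw [tz_word_eq, tz_word_eq]
    apply List.map_congr_left
    intro i hi
    rw [List.mem_range] at hi
    have e := tz_E a nseq hn p hp k t (j * w) (i + 1) (by omega) (by
      rw [mul_assoc, ← hPdef, ← hQdef]; omega)
    rw [mul_assoc, ← hPdef, ← hQdef] at e
    have e1 : (1 : ℤ) + i = ((i + 1 : ℕ) : ℤ) := by push_cast; ring
    have e2 : g (t, j) + i = ((t * Q + (j * P + (i + 1)) : ℕ) : ℤ) := by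
      simp only [g]; push_cast; ring
    rw [e1, e2, e]
  · intro z hz z' hz' hne
    rw [Finset.mem_image] at hz hz'
    obtain ⟨x, hx, rfl⟩ := hz
    obtain ⟨y, hy, rfl⟩ := hz'
    exact key x hx y hy (fun h => hne (by rw [h]))

theorem tz_main {α : Type*} (a : ℕ → α) (nseq : ℕ → ℕ) (hn : ∀ k, 2 ≤ nseq k) (p : ℤ → α)
    (hp : IsBlockInf a nseq p) (m : ℕ) (hm : 1 ≤ m) :
    (1 : ℝ) / 8 ≤ Filter.liminf
        (fun L : ℕ => (m : ℝ) / L * disjCount (word p 1 m) p L) Filter.atTop := by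
  have hlen : (word p 1 m).length = m := by simp [word]
  obtain ⟨k, hk1, hk2⟩ : ∃ k, tzq nseq k ≤ m ∧ m < tzq nseq (k + 1) := by
    by_contra hcon
    push Not at hcon
    have : ∀ k, tzq nseq k ≤ m := by
      intro k
      induction k with
      | zero => simpa [tzq] using hm
      | succ k ih => exact hcon k ih
    have h1 := this m
    have h2 := tz_pos nseq hn m
    omega
  have hq := tz_pos nseq hn k
  have hw1 : m < (m / tzq nseq k + 1) * tzq nseq k := by
    rw [mul_comm]; exact Nat.lt_mul_div_succ m (by omega)
  have hw2 : (m / tzq nseq k + 1) * tzq nseq k ≤ 2 * m := by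
    have := Nat.div_mul_le_self m (tzq nseq k)
    rw [Nat.add_mul]; omega
  have hw3 : (m / tzq nseq k + 1) * tzq nseq k ≤ tzq nseq (k + 1) := by
    simp only [tzq]
    apply Nat.mul_le_mul_right
    exact Nat.div_lt_of_lt_mul (by rw [mul_comm]; exact hk2)
  set w := m / tzq nseq k + 1
  set Q := tzq nseq (k + 1) with hQ
  set P := w * tzq nseq k with hP
  have hc1 : 1 ≤ Q / P := (Nat.one_le_div_iff (by omega)).2 hw3
  have hc2 : Q < P * (Q / P + 1) := Nat.lt_mul_div_succ Q (by omega)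
  have hc3 : Q / P * P ≤ Q := Nat.div_mul_le_self _ _
  have hmc : Q ≤ 4 * (m * (Q / P)) := by
    set c := Q / P
    have : P * (c + 1) ≤ (2 * m) * (c + c) := Nat.mul_le_mul hw2 (by omega)
    nlinarith
  apply Filter.le_liminf_of_le
  · apply Filter.IsBoundedUnder.isCoboundedUnder_ge
    refine ⟨m, ?_⟩
    rw [Filter.eventually_map]
    refine Filter.Eventually.of_forall fun L => ?_
    have hd : disjCount (word p 1 m) p L ≤ L := by
      unfold disjCount
      apply csSup_le' 
      exact fun x hx => tz_card_le _ p L (by rw [hlen]; exact hm) x hx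
    have hd' : (disjCount (word p 1 m) p L : ℝ) ≤ L := by exact_mod_cast hd
    rcases Nat.eq_zero_or_pos L with rfl | hL
    · simp
    · have hL' : (0 : ℝ) < L := by exact_mod_cast hL
      calc (m : ℝ) / L * disjCount (word p 1 m) p L ≤ (m : ℝ) / L * L := by gcongr
        _ = m := by field_simp
  · filter_upwards [Filter.eventually_ge_atTop (2 * Q)] with L hL
    have hT : L / Q * Q ≤ L := Nat.div_mul_le_self _ _
    have hT2 : L < Q * (L / Q + 1) := Nat.lt_mul_div_succ L (by omega)
    have hcount := tz_count a nseq hn p hp k m w (Q / P) (L / Q) L hm hw1.le hk2 hc3 hT hw1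
    have hfin : L ≤ 8 * (m * disjCount (word p 1 m) p L) := by
      have h1 : m * (L / Q * (Q / P)) ≤ m * disjCount (word p 1 m) p L :=
        Nat.mul_le_mul_left _ hcount
      have h2 : L / Q * Q ≤ L / Q * (4 * (m * (Q / P))) := Nat.mul_le_mul_left _ hmc
      have h3 : L ≤ 2 * (L / Q * Q) := by nlinarith
      nlinarith
    have hL' : (0 : ℝ) < L := by
      have : 0 < L := by omega
      exact_mod_cast this
    have hfin' : (L : ℝ) ≤ 8 * (m * disjCount (word p 1 m) p L) := by exact_mod_cast hfin
    rw [div_mul_eq_mul_div, div_le_div_iff₀ (by norm_num) hL']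
    linarith

/-- **Validity of (PQ).** For every prefix `v` of `block(∞)`,
`liminf_L (|v|/L)·#̃_v(block(∞)(1)⋯block(∞)(L)) ≥ 1/8`; in particular `block(∞)`
satisfies condition (PQ). -/
theorem statement15 {𝒜 : Type*} [Fintype 𝒜]
    (a : ℕ → 𝒜) (nseq : ℕ → ℕ) (ha : ∀ k, a (k + 1) ≠ a k) (hn : ∀ k, 2 ≤ nseq k)
    (p : ℤ → 𝒜) (hp : IsBlockInf a nseq p) :
    (∀ m : ℕ, 1 ≤ m →
      (1 : ℝ) / 8 ≤ Filter.liminf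
        (fun L : ℕ => (m : ℝ) / L * disjCount (word p 1 m) p L) Filter.atTop) ∧
    CondPQ p := by
  exact ⟨fun m hm => tz_main a nseq hn p hp m hm,
    1 / 8, by norm_num, fun m hm => tz_main a nseq hn p hp m hm⟩
end
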